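/- arXiv:math/0505037 — 9 statements merged into one kernel-verified Lean document; each statement's English description precedes it below -/
import Mathlib

section
/- Let σ ∈ ℂ(t) be a rational function of degree d ≥ 2 (degree means max of the degrees of numerator and denominator in lowest terms). If f ∈ ℂ(t) and ν ∈ ℤ with ν ≠ 0 satisfy (f ∘ σ) · (σ')^ν = f in ℂ(t), then f = 0. In other words, a complex rational map of degree at least 2 admits no nonzero invariant form of nonzero weight. -/
/-!
Inverting `f` changes the sign of `ν`, so let `ν > 0` and suppose `f ≠ 0`. Think of `f (dt)^ν` as a
form preserved by `σ`. If `σ(p) = q` with multiplicity `e`, then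
`ord_p f + ν = e (ord_q f + ν)` (`hasOrd_pullback`).

* The set `S` of points with `ord f + ν ≤ 0` is finite and contains all preimages of its points.
  Hence `σ` permutes `S`, each point of `S` has a single preimage, and a fixed point in `S` is
  totally ramified: its multiplier is `0`.
* At a fixed point outside `S` with multiplier `l ≠ 0`, leading coefficients give
  `l ^ (ord f + ν) = 1`, so `|l| = 1` (`multiplier_pow`). If `l = 1`, then
  `σ(t) - t = α (t - p)^(k+1) + …` with `k ≥ 1` and `α ≠ 0`, and the terms of relative order `k`
  give `ord f + ν = -k ν < 0`, which is impossible outside `S` (`multiplier_ne_one`).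

So all fixed points are simple, and `Re (1 / (1 - l)) ≥ 1 / 2` at each of them. There are
`d + 1 ≥ 3` fixed points, which contradicts the holomorphic fixed point formula
`∑ 1 / (1 - l) = 1`. That formula is Lagrange interpolation at the zeros of `t Q - P`, where
`σ = P / Q` (`fixed_point_formula`).

The point at infinity is dealt with by a change of coordinate `t ↦ c + 1 / t` with generic `c`
(`positive_weight`), after which only finite points matter (`core`). Local computations take
place in the local rings of `ℂ[t]`, through the predicates `Reg` (regular with given value)
and `HasOrd` (given order).
-/

open Polynomial

/-- Composition of rational functions: `f ∘ g = f.num(g) / f.denom(g)`. -/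
noncomputable def ratComp {k : Type*} [Field k] (f g : RatFunc k) : RatFunc k :=
  Polynomial.aeval g f.num / Polynomial.aeval g f.denom

/-- The formal derivative on `RatFunc k`, extending polynomial differentiation. -/
noncomputable def ratDeriv {k : Type*} [Field k] (f : RatFunc k) : RatFunc k :=
  algebraMap (Polynomial k) (RatFunc k)
      (Polynomial.derivative f.num * f.denom - f.num * Polynomial.derivative f.denom) /
    algebraMap (Polynomial k) (RatFunc k) (f.denom ^ 2)

/-- The order of a rational function at a point `a`. -/
noncomputable def ratOrd {k : Type*} [Field k] (a : k) (f : RatFunc k) : ℤ :=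
  (f.num.rootMultiplicity a : ℤ) - (f.denom.rootMultiplicity a : ℤ)

/-- A rational function is nonconstant. -/
def RatFuncNonconst {k : Type*} [Field k] (σ : RatFunc k) : Prop :=
  ¬ ∃ c : k, σ = RatFunc.C c

/-- The degree of a rational function. -/
noncomputable def ratDegree {k : Type*} [Field k] (f : RatFunc k) : ℕ :=
  max f.num.natDegree f.denom.natDegree

namespace InvForm

/-! ### Derivative and substitution -/

lemma frac_deriv_eq (n m a b : ℂ[X]) (hm : m ≠ 0) (hb : b ≠ 0) (h1 : n * b = a * m) :
    algebraMap ℂ[X] (RatFunc ℂ) (derivative n * m - n * derivative m) /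
        algebraMap ℂ[X] (RatFunc ℂ) (m ^ 2) =
      algebraMap ℂ[X] (RatFunc ℂ) (derivative a * b - a * derivative b) /
        algebraMap ℂ[X] (RatFunc ℂ) (b ^ 2) := by
  have h2 := congrArg derivative h1
  rw [derivative_mul, derivative_mul] at h2
  have h3 : (derivative n * m - n * derivative m) * b ^ 2 =
      (derivative a * b - a * derivative b) * m ^ 2 := by
    linear_combination (b * m) * h2 - (derivative b * m + b * derivative m) * h1
  rw [div_eq_div_iff (RatFunc.algebraMap_ne_zero (pow_ne_zero _ hm))
    (RatFunc.algebraMap_ne_zero (pow_ne_zero _ hb)), ← map_mul, ← map_mul, h3]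

/-- The formal derivative may be computed from any fraction, not only from the reduced one. -/
lemma ratDeriv_div (a b : ℂ[X]) (hb : b ≠ 0) :
    ratDeriv (algebraMap ℂ[X] (RatFunc ℂ) a / algebraMap ℂ[X] (RatFunc ℂ) b) =
      algebraMap ℂ[X] (RatFunc ℂ) (derivative a * b - a * derivative b) /
        algebraMap ℂ[X] (RatFunc ℂ) (b ^ 2) := by
  obtain ⟨x, hx⟩ : ∃ x, x = algebraMap ℂ[X] (RatFunc ℂ) a / algebraMap ℂ[X] (RatFunc ℂ) b :=
    ⟨_, rfl⟩
  rw [← hx]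
  have hd := RatFunc.denom_ne_zero x
  have h1 : x.num * b = a * x.denom := by
    apply RatFunc.algebraMap_injective ℂ
    have h := (RatFunc.num_div_denom x).trans hx
    rw [div_eq_div_iff (RatFunc.algebraMap_ne_zero hd) (RatFunc.algebraMap_ne_zero hb)] at h
    rw [map_mul, map_mul, h]
  exact frac_deriv_eq x.num x.denom a b hd hb h1

lemma exists_frac (x : RatFunc ℂ) : ∃ a b : ℂ[X], b ≠ 0 ∧
    x = algebraMap ℂ[X] (RatFunc ℂ) a / algebraMap ℂ[X] (RatFunc ℂ) b :=
  ⟨x.num, x.denom, RatFunc.denom_ne_zero x, (RatFunc.num_div_denom x).symm⟩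

lemma ratDeriv_add (x y : RatFunc ℂ) : ratDeriv (x + y) = ratDeriv x + ratDeriv y := by
  obtain ⟨a, b, hb, rfl⟩ := exists_frac x
  obtain ⟨c, e, he, rfl⟩ := exists_frac y
  have hb' : algebraMap ℂ[X] (RatFunc ℂ) b ≠ 0 := RatFunc.algebraMap_ne_zero hb
  have he' : algebraMap ℂ[X] (RatFunc ℂ) e ≠ 0 := RatFunc.algebraMap_ne_zero he
  rw [div_add_div _ _ hb' he', ← map_mul, ← map_mul, ← map_mul, ← map_add,
    ratDeriv_div _ _ (mul_ne_zero hb he), ratDeriv_div _ _ hb, ratDeriv_div _ _ he]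
  simp only [derivative_mul, map_sub, map_add, map_mul, map_pow]
  field_simp
  ring

lemma ratDeriv_mul (x y : RatFunc ℂ) :
    ratDeriv (x * y) = x * ratDeriv y + y * ratDeriv x := by
  obtain ⟨a, b, hb, rfl⟩ := exists_frac x
  obtain ⟨c, e, he, rfl⟩ := exists_frac y
  have hb' : algebraMap ℂ[X] (RatFunc ℂ) b ≠ 0 := RatFunc.algebraMap_ne_zero hb
  have he' : algebraMap ℂ[X] (RatFunc ℂ) e ≠ 0 := RatFunc.algebraMap_ne_zero he
  rw [div_mul_div_comm, ← map_mul, ← map_mul,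
    ratDeriv_div _ _ (mul_ne_zero hb he), ratDeriv_div _ _ hb, ratDeriv_div _ _ he]
  simp only [derivative_mul, map_sub, map_add, map_mul, map_pow]
  field_simp
  ring

lemma ratDeriv_algebraMap (a : ℂ[X]) :
    ratDeriv (algebraMap ℂ[X] (RatFunc ℂ) a) = algebraMap ℂ[X] (RatFunc ℂ) (derivative a) := by
  simpa using ratDeriv_div a 1 one_ne_zero

lemma ratDeriv_const (c : ℂ) : ratDeriv (algebraMap ℂ (RatFunc ℂ) c) = 0 := by
  rw [IsScalarTower.algebraMap_apply ℂ ℂ[X] (RatFunc ℂ), ratDeriv_algebraMap]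
  simp

/-- `ratDeriv` bundled as a `ℂ`-derivation of `ℂ(t)`. -/
noncomputable def D : Derivation ℂ (RatFunc ℂ) (RatFunc ℂ) :=
  Derivation.mk'
    { toFun := ratDeriv
      map_add' := ratDeriv_add
      map_smul' := fun c x => by
        rw [Algebra.smul_def, ratDeriv_mul, ratDeriv_const]
        simp [Algebra.smul_def] }
    (fun x y => by simpa using ratDeriv_mul x y)

lemma D_apply (x : RatFunc ℂ) : D x = ratDeriv x := rfl

lemma D_algebraMap (a : ℂ[X]) :
    D (algebraMap ℂ[X] (RatFunc ℂ) a) = algebraMap ℂ[X] (RatFunc ℂ) (derivative a) :=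
  ratDeriv_algebraMap a

lemma hom_algebraMap (θ : RatFunc ℂ →ₐ[ℂ] RatFunc ℂ) (a : ℂ[X]) :
    θ (algebraMap ℂ[X] (RatFunc ℂ) a) = aeval (θ RatFunc.X) a := by
  rw [aeval_algHom_apply, RatFunc.aeval_X_left_eq_algebraMap]

/-- Chain rule; an endomorphism `θ` of `ℂ(t)` over `ℂ` is the substitution `t ↦ θ(t)`. -/
lemma chain_rule (θ : RatFunc ℂ →ₐ[ℂ] RatFunc ℂ) (x : RatFunc ℂ) :
    D (θ x) = θ (D x) * D (θ RatFunc.X) := by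
  have hpoly : ∀ a : ℂ[X], D (θ (algebraMap ℂ[X] (RatFunc ℂ) a)) =
      θ (algebraMap ℂ[X] (RatFunc ℂ) (derivative a)) * D (θ RatFunc.X) := by
    intro a
    rw [hom_algebraMap, hom_algebraMap, Derivation.map_aeval, smul_eq_mul]
  obtain ⟨a, b, hb, hx⟩ := exists_frac x
  have hb' : algebraMap ℂ[X] (RatFunc ℂ) b ≠ 0 := RatFunc.algebraMap_ne_zero hb
  have hθb : θ (algebraMap ℂ[X] (RatFunc ℂ) b) ≠ 0 := by simpa using hb'
  have h : x * algebraMap ℂ[X] (RatFunc ℂ) b = algebraMap ℂ[X] (RatFunc ℂ) a := by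
    rw [hx]; field_simp
  have h1 := congrArg (fun y => θ (D y)) h
  have h2 := congrArg (fun y => D (θ y)) h
  simp only [map_mul, Derivation.leibniz, smul_eq_mul, map_add, D_algebraMap] at h1
  simp only [map_mul, Derivation.leibniz, smul_eq_mul, hpoly] at h2
  apply mul_left_cancel₀ hθb
  linear_combination h2 - D (θ RatFunc.X) * h1

/-- Substitution of a nonconstant rational function, as a field endomorphism of `ℂ(t)`. -/
lemma exists_subst (g : RatFunc ℂ) (hg : ¬ ∃ c : ℂ, g = RatFunc.C c) :
    ∃ θ : RatFunc ℂ →ₐ[ℂ] RatFunc ℂ, θ RatFunc.X = g ∧ ∀ x, ratComp x g = θ x := by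
  have htr : Transcendental ℂ g := RatFunc.transcendental_of_ne_C _ hg
  have hinj : Function.Injective (aeval g : ℂ[X] →ₐ[ℂ] RatFunc ℂ) :=
    transcendental_iff_injective.mp htr
  have hle : nonZeroDivisors ℂ[X] ≤
      (nonZeroDivisors (RatFunc ℂ)).comap (aeval g : ℂ[X] →ₐ[ℂ] RatFunc ℂ) :=
    nonZeroDivisors_le_comap_nonZeroDivisors_of_injective _ hinj
  refine ⟨RatFunc.liftAlgHom (aeval g) hle, ?_, fun x => ?_⟩
  · rw [← RatFunc.algebraMap_X]
    have := RatFunc.liftAlgHom_apply_div (φ := (aeval g : ℂ[X] →ₐ[ℂ] RatFunc ℂ)) hle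
      (Polynomial.X) 1
    simpa using this
  · rw [RatFunc.liftAlgHom_apply]; rfl

/-! ### Values and orders at a point -/

/-- `x` is regular at the point `p`, with value `v` there. -/
def Reg (p : ℂ) (x : RatFunc ℂ) (v : ℂ) : Prop :=
  ∃ a b : ℂ[X], b.eval p ≠ 0 ∧
    x * algebraMap ℂ[X] (RatFunc ℂ) b = algebraMap ℂ[X] (RatFunc ℂ) a ∧
    a.eval p = v * b.eval p

lemma Reg.poly (p : ℂ) (a : ℂ[X]) : Reg p (algebraMap ℂ[X] (RatFunc ℂ) a) (a.eval p) :=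
  ⟨a, 1, by simp, by simp, by simp⟩

lemma Reg.const (p c : ℂ) : Reg p (algebraMap ℂ (RatFunc ℂ) c) c := by
  rw [IsScalarTower.algebraMap_apply ℂ ℂ[X] (RatFunc ℂ)]
  simpa using Reg.poly p (C c)

lemma Reg.one (p : ℂ) : Reg p 1 1 := by
  simpa using Reg.const p 1

lemma Reg.add {p : ℂ} {x y : RatFunc ℂ} {v w : ℂ} (hx : Reg p x v) (hy : Reg p y w) :
    Reg p (x + y) (v + w) := by
  obtain ⟨a, b, hb, h, e⟩ := hx
  obtain ⟨a', b', hb', h', e'⟩ := hy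
  refine ⟨a * b' + a' * b, b * b', by simp [hb, hb'], ?_, ?_⟩
  · simp only [map_add, map_mul, ← h, ← h']; ring
  · simp only [eval_add, eval_mul, e, e']; ring

lemma Reg.mul {p : ℂ} {x y : RatFunc ℂ} {v w : ℂ} (hx : Reg p x v) (hy : Reg p y w) :
    Reg p (x * y) (v * w) := by
  obtain ⟨a, b, hb, h, e⟩ := hx
  obtain ⟨a', b', hb', h', e'⟩ := hy
  refine ⟨a * a', b * b', by simp [hb, hb'], ?_, ?_⟩
  · simp only [map_mul, ← h, ← h']; ring
  · simp only [eval_mul, e, e']; ring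

lemma Reg.inv {p : ℂ} {x : RatFunc ℂ} {v : ℂ} (hx : Reg p x v) (hv : v ≠ 0) :
    Reg p x⁻¹ v⁻¹ := by
  obtain ⟨a, b, hb, h, e⟩ := hx
  have hb0 : b ≠ 0 := by rintro rfl; simp at hb
  have ha : a.eval p ≠ 0 := by rw [e]; exact mul_ne_zero hv hb
  have ha0 : a ≠ 0 := by rintro rfl; simp at ha
  have hx0 : x ≠ 0 := by
    rintro rfl
    rw [zero_mul] at h
    exact RatFunc.algebraMap_ne_zero ha0 h.symm
  refine ⟨b, a, ha, ?_, ?_⟩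
  · rw [← h]; field_simp
  · rw [e]; field_simp

lemma Reg.neg {p : ℂ} {x : RatFunc ℂ} {v : ℂ} (hx : Reg p x v) : Reg p (-x) (-v) := by
  simpa using (Reg.const p (-1)).mul hx

lemma Reg.sub {p : ℂ} {x y : RatFunc ℂ} {v w : ℂ} (hx : Reg p x v) (hy : Reg p y w) :
    Reg p (x - y) (v - w) := by
  simpa [sub_eq_add_neg] using hx.add hy.neg

lemma Reg.div {p : ℂ} {x y : RatFunc ℂ} {v w : ℂ} (hx : Reg p x v) (hy : Reg p y w)
    (hw : w ≠ 0) : Reg p (x / y) (v / w) := by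
  simpa [div_eq_mul_inv] using hx.mul (hy.inv hw)

lemma Reg.pow {p : ℂ} {x : RatFunc ℂ} {v : ℂ} (hx : Reg p x v) (n : ℕ) :
    Reg p (x ^ n) (v ^ n) := by
  induction n with
  | zero => simpa using Reg.one p
  | succ n ih => simpa [pow_succ] using ih.mul hx

lemma Reg.zpow {p : ℂ} {x : RatFunc ℂ} {v : ℂ} (hx : Reg p x v) (hv : v ≠ 0) (n : ℤ) :
    Reg p (x ^ n) (v ^ n) := by
  cases n with
  | ofNat n => simpa using hx.pow n
  | negSucc n => simpa [zpow_negSucc] using (hx.pow (n + 1)).inv (pow_ne_zero _ hv)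

lemma Reg.unique {p : ℂ} {x : RatFunc ℂ} {v w : ℂ} (hx : Reg p x v) (hy : Reg p x w) :
    v = w := by
  obtain ⟨a, b, hb, h, e⟩ := hx
  obtain ⟨a', b', hb', h', e'⟩ := hy
  have h1 : a * b' = a' * b := by
    apply RatFunc.algebraMap_injective ℂ
    simp only [map_mul, ← h, ← h']; ring
  have h2 := congrArg (eval p) h1
  simp only [eval_mul, e, e'] at h2
  have : (v - w) * (b.eval p * b'.eval p) = 0 := by linear_combination h2
  rcases mul_eq_zero.mp this with h | h
  · exact sub_eq_zero.mp h
  · exact absurd h (mul_ne_zero hb hb')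

lemma Reg.ne_zero {p : ℂ} {x : RatFunc ℂ} {v : ℂ} (hx : Reg p x v) (hv : v ≠ 0) : x ≠ 0 := by
  rintro rfl
  exact hv (hx.unique (by simpa using Reg.const p 0))

lemma Reg.deriv {p : ℂ} {x : RatFunc ℂ} {v : ℂ} (hx : Reg p x v) : ∃ w, Reg p (D x) w := by
  obtain ⟨a, b, hb, h, e⟩ := hx
  have hb0 : b ≠ 0 := by rintro rfl; simp at hb
  have hb' : algebraMap ℂ[X] (RatFunc ℂ) b ≠ 0 := RatFunc.algebraMap_ne_zero hb0
  have : x = algebraMap ℂ[X] (RatFunc ℂ) a / algebraMap ℂ[X] (RatFunc ℂ) b := by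
    rw [← h]; field_simp
  rw [D_apply, this, ratDeriv_div _ _ hb0]
  exact ⟨_, (Reg.poly p _).div (Reg.poly p _) (by simpa using hb)⟩

lemma Reg.aeval {p q : ℂ} {g : RatFunc ℂ} (hg : Reg p g q) (a : ℂ[X]) :
    Reg p (Polynomial.aeval g a) (a.eval q) := by
  induction a using Polynomial.induction_on' with
  | add a b ha hb => simpa using ha.add hb
  | monomial n c =>
    simpa [aeval_monomial] using (Reg.const p c).mul (hg.pow n)

lemma Reg.subst {p q : ℂ} {θ : RatFunc ℂ →ₐ[ℂ] RatFunc ℂ} (hg : Reg p (θ RatFunc.X) q)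
    {x : RatFunc ℂ} {v : ℂ} (hx : Reg q x v) : Reg p (θ x) v := by
  obtain ⟨a, b, hb, h, e⟩ := hx
  have hb1 := Reg.aeval hg b
  have ha1 := Reg.aeval hg a
  rw [← hom_algebraMap] at ha1 hb1
  have h0 := hb1.ne_zero hb
  have h1 : θ x = θ (algebraMap _ _ a) / θ (algebraMap _ _ b) := by
    rw [← h, map_mul]; field_simp
  have h2 : v = a.eval q / b.eval q := by rw [e]; field_simp
  rw [h1, h2]
  exact ha1.div hb1 hb

/-- The local parameter `t - p` at the point `p`. -/
noncomputable def par (p : ℂ) : RatFunc ℂ := algebraMap ℂ[X] (RatFunc ℂ) (X - C p)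

lemma par_eq (p : ℂ) : par p = RatFunc.X - algebraMap ℂ (RatFunc ℂ) p := by
  rw [par, map_sub, RatFunc.algebraMap_X, IsScalarTower.algebraMap_apply ℂ ℂ[X] (RatFunc ℂ)]
  simp

lemma par_ne_zero (p : ℂ) : par p ≠ 0 := RatFunc.algebraMap_ne_zero (X_sub_C_ne_zero p)

lemma D_par (p : ℂ) : D (par p) = 1 := by
  rw [par, D_algebraMap]; simp

lemma Reg.par (p : ℂ) : Reg p (par p) 0 := by
  have h := Reg.poly p (Polynomial.X - C p)
  rwa [eval_sub, eval_X, eval_C, sub_self] at h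

lemma Reg.X (p : ℂ) : Reg p RatFunc.X p := by
  simpa using Reg.poly p Polynomial.X

/-- `x` has order exactly `j` at `p`. -/
def HasOrd (p : ℂ) (x : RatFunc ℂ) (j : ℤ) : Prop :=
  ∃ u v, v ≠ 0 ∧ Reg p u v ∧ x = par p ^ j * u

lemma poly_factor (p : ℂ) (a : ℂ[X]) (ha : a ≠ 0) :
    ∃ (n : ℕ) (b : ℂ[X]), b.eval p ≠ 0 ∧ a = (X - C p) ^ n * b := by
  obtain ⟨b, hb, hdvd⟩ := exists_eq_pow_rootMultiplicity_mul_and_not_dvd a ha p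
  exact ⟨_, b, fun h => hdvd (dvd_iff_isRoot.mpr h), hb⟩

lemma exists_hasOrd (p : ℂ) (x : RatFunc ℂ) (hx : x ≠ 0) : ∃ j, HasOrd p x j := by
  obtain ⟨a, b, hb, rfl⟩ := exists_frac x
  have ha : a ≠ 0 := by rintro rfl; simp at hx
  obtain ⟨n, a', ha', ea⟩ := poly_factor p a ha
  obtain ⟨m, b', hb', eb⟩ := poly_factor p b hb
  refine ⟨(n : ℤ) - m, _, _, div_ne_zero ha' hb', (Reg.poly p a').div (Reg.poly p b') hb', ?_⟩
  have hb0 : algebraMap ℂ[X] (RatFunc ℂ) b' ≠ 0 := (Reg.poly p b').ne_zero hb'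
  rw [zpow_sub₀ (par_ne_zero p), ea, eb, zpow_natCast, zpow_natCast, par]
  simp only [map_mul, map_pow]
  have := par_ne_zero p
  rw [par] at this
  field_simp

/-- Regular functions have nonnegative order. -/
lemma HasOrd.nonneg {p : ℂ} {x : RatFunc ℂ} {j : ℤ} {w : ℂ} (h : HasOrd p x j)
    (hx : Reg p x w) : 0 ≤ j := by
  by_contra! hj
  obtain ⟨u, v, hv, hu, e⟩ := h
  obtain ⟨n, rfl⟩ : ∃ n : ℕ, j = -(n + 1 : ℕ) := ⟨(-j - 1).toNat, by lia⟩
  have hne := par_ne_zero p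
  have : u = x * par p ^ (n + 1) := by
    rw [e, zpow_neg, zpow_natCast]; field_simp
  rw [this] at hu
  have h2 := hx.mul ((Reg.par p).pow (n + 1))
  exact hv (by simpa using hu.unique h2)

lemma HasOrd.unique {p : ℂ} {x : RatFunc ℂ} {i j : ℤ} (hi : HasOrd p x i)
    (hj : HasOrd p x j) : i = j := by
  have key : ∀ {i j : ℤ}, HasOrd p x i → HasOrd p x j → i ≤ j := by
    rintro i j ⟨u, v, hv, hu, e⟩ ⟨u', v', hv', hu', e'⟩
    have hne := par_ne_zero p
    have hu0 := hu.ne_zero hv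
    have h1 : HasOrd p (u' / u) (i - j) := by
      refine ⟨1, 1, one_ne_zero, Reg.one p, ?_⟩
      have h := e.symm.trans e'
      rw [zpow_sub₀ hne, mul_one, div_eq_div_iff hu0 (zpow_ne_zero _ hne)]
      linear_combination -h
    have h2 : HasOrd p (u / u') (j - i) := by
      refine ⟨1, 1, one_ne_zero, Reg.one p, ?_⟩
      have h := e.symm.trans e'
      rw [zpow_sub₀ hne, mul_one, div_eq_div_iff (hu'.ne_zero hv') (zpow_ne_zero _ hne)]
      linear_combination h
    have := h2.nonneg (hu.div hu' hv')
    lia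
  exact le_antisymm (key hi hj) (key hj hi)

/-- If `x` vanishes at `p`, it is divisible by the local parameter, and the quotient takes at `p`
the value of the derivative. -/
lemma Reg.exists_quot {p : ℂ} {x : RatFunc ℂ} (hx : Reg p x 0) :
    ∃ s w, Reg p s w ∧ x = InvForm.par p * s ∧ Reg p (D x) w := by
  obtain ⟨a, b, hb, h, e⟩ := hx
  rw [zero_mul] at e
  obtain ⟨c, rfl⟩ := dvd_iff_isRoot.mpr e
  have hb1 := Reg.poly p b
  have hb0 := hb1.ne_zero hb
  have hs := (Reg.poly p c).div hb1 hb
  have hxs : x = InvForm.par p *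
      (algebraMap ℂ[X] (RatFunc ℂ) c / algebraMap ℂ[X] (RatFunc ℂ) b) := by
    rw [InvForm.par, ← mul_div_assoc, ← map_mul, ← h]; field_simp
  refine ⟨_, _, hs, hxs, ?_⟩
  obtain ⟨w, hw⟩ := hs.deriv
  rw [hxs, Derivation.leibniz, D_par, smul_eq_mul, smul_eq_mul, mul_one]
  simpa using ((Reg.par p).mul hw).add hs

/-! ### Invariant forms at preimages and fixed points -/

lemma D_sub_const (x : RatFunc ℂ) (c : ℂ) : D (x - algebraMap ℂ (RatFunc ℂ) c) = D x := by
  rw [map_sub, Derivation.map_algebraMap, sub_zero]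

lemma hom_par (θ : RatFunc ℂ →ₐ[ℂ] RatFunc ℂ) (q : ℂ) :
    θ (par q) = θ RatFunc.X - algebraMap ℂ (RatFunc ℂ) q := by
  rw [par_eq, map_sub, AlgHom.commutes]

/-- Order of a pulled back form: if the substituted function takes the value `q` at `p` with
multiplicity `e = n + 1`, then `ord_p (θ^* f) + ν = e (ord_q f + ν)`. -/
lemma hasOrd_pullback {θ : RatFunc ℂ →ₐ[ℂ] RatFunc ℂ} {p q : ℂ} (hg : Reg p (θ RatFunc.X) q)
    {f : RatFunc ℂ} {j : ℤ} (hf : HasOrd q f j) (ν : ℤ) :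
    ∃ n : ℕ, HasOrd p (θ f * D (θ RatFunc.X) ^ ν) ((n + 1) * (j + ν) - ν) := by
  have ht := par_ne_zero p
  have h0 : θ (par q) ≠ 0 := by simpa using par_ne_zero q
  have hz : Reg p (θ (par q)) 0 := by
    rw [hom_par]; simpa using hg.sub (Reg.const p q)
  obtain ⟨s, w, hs, es, -⟩ := hz.exists_quot
  have hs0 : s ≠ 0 := by rintro rfl; simp [es] at h0
  obtain ⟨e, he⟩ := exists_hasOrd p s hs0
  have he0 := he.nonneg hs
  obtain ⟨n, rfl⟩ := Int.eq_ofNat_of_zero_le he0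
  obtain ⟨a, α, hα, ha, ea⟩ := he
  obtain ⟨a', ha'⟩ := ha.deriv
  have hθ : θ (par q) = par p ^ (n + 1) * a := by
    rw [es, ea, zpow_natCast]; ring
  have hD : D (θ RatFunc.X) = par p ^ n * (algebraMap ℂ (RatFunc ℂ) (n + 1) * a + par p * D a) := by
    rw [← D_sub_const _ q, ← hom_par, hθ, Derivation.leibniz, Derivation.leibniz_pow, D_par]
    simp
    ring
  have hb : Reg p (algebraMap ℂ (RatFunc ℂ) (n + 1) * a + par p * D a)
      ((n + 1) * α + 0 * a') :=
    ((Reg.const p _).mul ha).add ((Reg.par p).mul ha')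
  have hb0 : ((n + 1) * α + 0 * a' : ℂ) ≠ 0 := by
    have : (n + 1 : ℂ) ≠ 0 := by exact_mod_cast Nat.succ_ne_zero n
    simpa using ⟨this, hα⟩
  obtain ⟨u, v, hv, hu, ef⟩ := hf
  refine ⟨n, _, _, ?_, ((ha.zpow hα j).mul (hg.subst hu)).mul (hb.zpow hb0 ν), ?_⟩
  · exact mul_ne_zero (mul_ne_zero (zpow_ne_zero _ hα) hv) (zpow_ne_zero _ hb0)
  · have h3 : ((n : ℤ) + 1) * (j + ν) - ν = ((n + 1 : ℕ) : ℤ) * j + (n : ℤ) * ν := by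
      push_cast; ring
    rw [ef, map_mul, map_zpow₀, hθ, hD, h3, zpow_add₀ ht, mul_zpow, mul_zpow, zpow_mul, zpow_mul,
      zpow_natCast, zpow_natCast]
    ring

/-- At a fixed point with multiplier `l ≠ 0`, comparing leading coefficients of an invariant form
of order `j` gives `l ^ (j + ν) = 1`. -/
lemma multiplier_pow {θ : RatFunc ℂ →ₐ[ℂ] RatFunc ℂ} {p l : ℂ} (hg : Reg p (θ RatFunc.X) p)
    (hl : Reg p (D (θ RatFunc.X)) l) (hl0 : l ≠ 0) {f : RatFunc ℂ} {j ν : ℤ} (hf : HasOrd p f j)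
    (hinv : θ f * D (θ RatFunc.X) ^ ν = f) : l ^ (j + ν) = 1 := by
  have ht := par_ne_zero p
  have hz : Reg p (θ (par p)) 0 := by
    rw [hom_par]; simpa using hg.sub (Reg.const p p)
  obtain ⟨s, w, hs, es, hw⟩ := hz.exists_quot
  rw [hom_par, D_sub_const] at hw
  obtain rfl := hw.unique hl
  obtain ⟨u, v, hv, hu, ef⟩ := hf
  have h1 : s ^ j * θ u * D (θ RatFunc.X) ^ ν = u := by
    apply mul_left_cancel₀ (zpow_ne_zero j ht)
    rw [← ef, ← hinv, ef, map_mul, map_zpow₀, es, mul_zpow]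
    ring
  have h2 := ((hs.zpow hl0 j).mul (hg.subst hu)).mul (hl.zpow hl0 ν)
  rw [h1] at h2
  have h3 := hu.unique h2
  rw [zpow_add₀ hl0]
  apply mul_left_cancel₀ hv
  linear_combination -h3

/-- `x = 1 + c (t - p) ^ k + …` near `p`. -/
def OneAdd (p : ℂ) (k : ℕ) (x : RatFunc ℂ) (c : ℂ) : Prop :=
  ∃ r, Reg p r c ∧ x = 1 + par p ^ k * r

lemma OneAdd.reg {p : ℂ} {k : ℕ} {x : RatFunc ℂ} {c : ℂ} (hk : k ≠ 0) (hx : OneAdd p k x c) :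
    Reg p x 1 := by
  obtain ⟨r, hr, rfl⟩ := hx
  simpa [hk] using (Reg.one p).add (((Reg.par p).pow k).mul hr)

lemma OneAdd.mul {p : ℂ} {k : ℕ} {x y : RatFunc ℂ} {c e : ℂ} (hk : k ≠ 0)
    (hx : OneAdd p k x c) (hy : OneAdd p k y e) : OneAdd p k (x * y) (c + e) := by
  have hy' := hy.reg hk
  obtain ⟨r, hr, rfl⟩ := hx
  obtain ⟨r', hr', hyr⟩ := hy
  refine ⟨r * y + r', by simpa using (hr.mul hy').add hr', ?_⟩
  rw [hyr]; ring

lemma OneAdd.inv {p : ℂ} {k : ℕ} {x : RatFunc ℂ} {c : ℂ} (hk : k ≠ 0) (hx : OneAdd p k x c) :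
    OneAdd p k x⁻¹ (-c) := by
  have hx' := hx.reg hk
  have hx0 := hx'.ne_zero one_ne_zero
  obtain ⟨r, hr, hxr⟩ := hx
  refine ⟨-(r / x), by simpa using (hr.div hx' one_ne_zero).neg, ?_⟩
  field_simp
  rw [hxr]; ring

lemma OneAdd.pow {p : ℂ} {k : ℕ} {x : RatFunc ℂ} {c : ℂ} (hk : k ≠ 0) (hx : OneAdd p k x c)
    (n : ℕ) : OneAdd p k (x ^ n) (n * c) := by
  induction n with
  | zero => exact ⟨0, by simpa using Reg.const p 0, by simp⟩
  | succ n ih =>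
    have := ih.mul hk hx
    rw [pow_succ]
    convert this using 1
    push_cast; ring

lemma OneAdd.zpow {p : ℂ} {k : ℕ} {x : RatFunc ℂ} {c : ℂ} (hk : k ≠ 0) (hx : OneAdd p k x c)
    (n : ℤ) : OneAdd p k (x ^ n) (n * c) := by
  cases n with
  | ofNat n => simpa using hx.pow hk n
  | negSucc n =>
    have := (hx.pow hk (n + 1)).inv hk
    rw [zpow_negSucc]
    convert this using 1
    push_cast; ring

/-- `θ u - u` is divisible by `θ(t) - t` in the local ring of a fixed point. -/
lemma subst_sub_self {θ : RatFunc ℂ →ₐ[ℂ] RatFunc ℂ} {p : ℂ} (hg : Reg p (θ RatFunc.X) p)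
    {u : RatFunc ℂ} {v : ℂ} (hu : Reg p u v) :
    ∃ r w, Reg p r w ∧ θ u - u = (θ RatFunc.X - RatFunc.X) * r := by
  have hpoly : ∀ a : ℂ[X], ∃ r w, Reg p r w ∧
      θ (algebraMap ℂ[X] (RatFunc ℂ) a) - algebraMap ℂ[X] (RatFunc ℂ) a =
        (θ RatFunc.X - RatFunc.X) * r := by
    intro a
    induction a using Polynomial.induction_on with
    | C c =>
      refine ⟨0, 0, by simpa using Reg.const p 0, ?_⟩
      rw [hom_algebraMap, ← RatFunc.aeval_X_left_eq_algebraMap]; simp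
    | add a b ha hb =>
      obtain ⟨r, w, hr, e⟩ := ha
      obtain ⟨r', w', hr', e'⟩ := hb
      refine ⟨_, _, hr.add hr', ?_⟩
      rw [map_add, map_add, mul_add, ← e, ← e']; ring
    | monomial n c ih =>
      obtain ⟨r, w, hr, e⟩ := ih
      refine ⟨_, _, (hg.mul hr).add (Reg.poly p (C c * X ^ n)), ?_⟩
      rw [pow_succ, ← mul_assoc, map_mul, map_mul, RatFunc.algebraMap_X]
      linear_combination θ RatFunc.X * e
  obtain ⟨a, b, hb, h, e⟩ := id hu
  obtain ⟨ra, wa, hra, ea⟩ := hpoly a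
  obtain ⟨rb, wb, hrb, eb⟩ := hpoly b
  have hθb := hg.subst (Reg.poly p b)
  have h0 := hθb.ne_zero hb
  refine ⟨_, _, (hra.sub (hu.mul hrb)).div hθb hb, ?_⟩
  have h' := congrArg θ h
  rw [map_mul] at h'
  field_simp
  linear_combination h' - h + ea - u * eb

/-- A multiple fixed point forces `j + ν = -k ν` with `k ≥ 1`, where `j` is the order of the
invariant form; in particular `j + ν` and `ν` cannot both be positive. -/
lemma multiplier_ne_one {θ : RatFunc ℂ →ₐ[ℂ] RatFunc ℂ} {p : ℂ} (hg : Reg p (θ RatFunc.X) p)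
    (hne : θ RatFunc.X ≠ RatFunc.X) {f : RatFunc ℂ} {j ν : ℤ} (hf : HasOrd p f j)
    (hν : 0 < ν) (hj : 0 < j + ν) (hinv : θ f * D (θ RatFunc.X) ^ ν = f) :
    ¬ Reg p (D (θ RatFunc.X)) 1 := by
  intro hl
  have ht := par_ne_zero p
  obtain ⟨y, hy⟩ : ∃ y, y = θ RatFunc.X - RatFunc.X := ⟨_, rfl⟩
  have hDX : D RatFunc.X = 1 := by
    rw [← RatFunc.algebraMap_X, D_algebraMap]; simp
  have hDy : D y = D (θ RatFunc.X) - 1 := by rw [hy, map_sub, hDX]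
  have hy0 : y ≠ 0 := by rw [hy]; exact sub_ne_zero.mpr hne
  have hyz : Reg p y 0 := by rw [hy]; simpa using hg.sub (Reg.X p)
  obtain ⟨s, w, hs, es, hw⟩ := hyz.exists_quot
  have hw0 : w = 0 := by
    refine hw.unique ?_
    rw [hDy]; simpa using hl.sub (Reg.one p)
  subst hw0
  obtain ⟨s', w', hs', es', -⟩ := hs.exists_quot
  have hs0 : s' ≠ 0 := by rintro rfl; simp [es', es] at hy0
  obtain ⟨e, he⟩ := exists_hasOrd p s' hs0
  obtain ⟨m, rfl⟩ := Int.eq_ofNat_of_zero_le (he.nonneg hs')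
  obtain ⟨a, α, hα, ha, ea⟩ := he
  obtain ⟨a', ha'⟩ := ha.deriv
  have hk : m + 1 ≠ 0 := Nat.succ_ne_zero m
  have hya : y = par p ^ (m + 2) * a := by
    rw [es, es', ea, zpow_natCast]; ring
  obtain ⟨u, v, hv, hu, ef⟩ := hf
  have hu0 := hu.ne_zero hv
  -- the three factors of the invariance equation, expanded to order `m + 1`
  have h1 : OneAdd p (m + 1) (θ (par p) / par p) α := by
    refine ⟨a, ha, ?_⟩
    have : θ (par p) = par p + y := by rw [hom_par, hy, par_eq]; ring
    rw [this, hya]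
    field_simp
    ring
  have h2 : OneAdd p (m + 1) (D (θ RatFunc.X)) ((m + 2) * α) := by
    refine ⟨algebraMap ℂ (RatFunc ℂ) (m + 2) * a + par p * D a, ?_, ?_⟩
    · simpa using ((Reg.const p (m + 2)).mul ha).add ((Reg.par p).mul ha')
    · have : D (θ RatFunc.X) = 1 + D y := by rw [hDy]; ring
      have hc : algebraMap ℂ (RatFunc ℂ) (m + 2) = m + 2 := by
        rw [map_add, map_natCast, map_ofNat]
      rw [this, hya, Derivation.leibniz, Derivation.leibniz_pow, D_par, hc]
      simp
      ring
  have h3 : OneAdd p (m + 1) (θ u / u) 0 := by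
    obtain ⟨r, w, hr, er⟩ := subst_sub_self hg hu
    refine ⟨par p * (a * r / u), ?_, ?_⟩
    · simpa using (Reg.par p).mul ((ha.mul hr).div hu hv)
    · rw [← hy, hya] at er
      field_simp
      linear_combination er
  have h4 : (θ (par p) / par p) ^ j * D (θ RatFunc.X) ^ ν * (θ u / u) = 1 := by
    have hj0 := zpow_ne_zero j ht
    rw [ef, map_mul, map_zpow₀] at hinv
    rw [div_zpow]
    field_simp
    linear_combination hinv
  obtain ⟨r, hr, er⟩ := ((h1.zpow hk j).mul hk (h2.zpow hk ν)).mul hk h3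
  rw [h4, left_eq_add, mul_eq_zero] at er
  rcases er with er | rfl
  · exact pow_ne_zero _ ht er
  · have h5 := hr.unique (by simpa using Reg.const p 0)
    have h6 : ((j + ν * (m + 2) : ℤ) : ℂ) * α = 0 := by push_cast; linear_combination h5
    have h7 : j + ν * (m + 2) = 0 := by
      exact_mod_cast (mul_eq_zero.mp h6).resolve_right hα
    have : 0 ≤ ν * m := by positivity
    nlinarith

/-! ### Fixed points and the case of a good coordinate -/

/-- For `|l| = 1` with `l ≠ 1`, the point `1 / (1 - l)` lies on the line `Re = 1/2`. -/
lemma re_inv_one_sub {l : ℂ} (hl : ‖l‖ = 1) (h1 : l ≠ 1) : (1 / (1 - l)).re = 1 / 2 := by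
  have hn : Complex.normSq (1 - l) ≠ 0 := by
    simpa [sub_eq_zero] using h1.symm
  have h2 : l.re * l.re + l.im * l.im = 1 := by
    rw [← Complex.normSq_apply, Complex.normSq_eq_norm_sq, hl]; norm_num
  rw [one_div, Complex.inv_re, div_eq_iff hn, Complex.normSq_apply]
  simp
  linear_combination (-1 / 2 : ℝ) * h2

/-- Holomorphic fixed point formula: for simple zeros `z` of `R = t Q - P`, where `R'(z) / Q(z)` is
one minus the multiplier of `P / Q` at `z`, the residues `Q(z) / R'(z)` add up to `1`. -/
lemma fixed_point_formula (P Q : ℂ[X]) (d : ℕ) (hQ : Q.natDegree = d) (hQ0 : Q ≠ 0)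
    (hP : P.natDegree ≤ d)
    (hsimple : ∀ z, (X * Q - P).eval z = 0 → (derivative (X * Q - P)).eval z ≠ 0) :
    ∃ s : Finset ℂ, s.card = d + 1 ∧ (∀ z ∈ s, (X * Q - P).eval z = 0) ∧
      ∑ z ∈ s, Q.eval z / (derivative (X * Q - P)).eval z = 1 := by
  obtain ⟨R, hR⟩ : ∃ R, R = X * Q - P := ⟨_, rfl⟩
  rw [← hR] at hsimple ⊢
  have hXQ : (X * Q).natDegree = d + 1 := by rw [natDegree_X_mul hQ0, hQ]
  have hdeg : R.natDegree = d + 1 := by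
    rw [hR, natDegree_sub_eq_left_of_natDegree_lt (by lia), hXQ]
  have hlead : R.leadingCoeff = Q.coeff d := by
    rw [leadingCoeff, hdeg, hR, coeff_sub, coeff_X_mul, coeff_eq_zero_of_natDegree_lt (n := d + 1),
      sub_zero]
    lia
  have hR0 : R ≠ 0 := by rintro h; simp [h] at hdeg
  have hnodup : R.roots.Nodup := by
    rw [Multiset.nodup_iff_count_le_one]
    intro z
    rw [count_roots]
    by_contra! h
    have h1 := (one_lt_rootMultiplicity_iff_isRoot hR0).mp h
    exact hsimple z h1.1 h1.2
  have hsplit : R.Splits := IsAlgClosed.splits R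
  have hcard : R.roots.card = d + 1 := by rw [← hdeg, hsplit.natDegree_eq_card_roots]
  have hscard : R.roots.toFinset.card = d + 1 := by
    rw [Multiset.toFinset_card_of_nodup hnodup, hcard]
  have hroot : ∀ z ∈ R.roots.toFinset, R.eval z = 0 := by
    intro z hz
    exact (mem_roots'.mp (Multiset.mem_toFinset.mp hz)).2
  refine ⟨R.roots.toFinset, hscard, hroot, ?_⟩
  have hprod : R = C R.leadingCoeff * Lagrange.nodal R.roots.toFinset id := by
    conv_lhs => rw [hsplit.eq_prod_roots]
    rw [Lagrange.nodal, Finset.prod_eq_multiset_prod, Multiset.toFinset_val, hnodup.dedup]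
    rfl
  have hQd : Q.coeff d ≠ 0 := by rw [← hQ]; exact leadingCoeff_ne_zero.mpr hQ0
  have hder : ∀ z ∈ R.roots.toFinset, (derivative R).eval z =
      Q.coeff d * ∏ w ∈ R.roots.toFinset.erase z, (z - w) := by
    intro z hz
    have h := Lagrange.eval_nodal_derivative_eval_node_eq (v := (id : ℂ → ℂ)) hz
    rw [Lagrange.eval_nodal] at h
    conv_lhs => rw [hprod]
    rw [derivative_C_mul, eval_mul, eval_C, hlead]
    exact congrArg _ h
  have hsum := Lagrange.coeff_eq_sum (s := R.roots.toFinset) (v := (id : ℂ → ℂ)) (P := Q)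
    (Set.injOn_id _) (by
      rw [hscard]
      refine lt_of_le_of_lt degree_le_natDegree ?_
      rw [hQ]; exact_mod_cast Nat.lt_succ_self d)
  rw [hscard, Nat.add_sub_cancel] at hsum
  rw [Finset.sum_congr rfl (fun z hz => by
    rw [hder z hz, mul_comm, ← div_div])]
  rw [← Finset.sum_div, div_eq_one_iff_eq hQd]
  exact hsum.symm

/-- The result for a positive weight, when the coordinate is such that `∞` is mapped to a finite
point at which `f` has neither a zero nor a pole. -/
theorem core (P Q : ℂ[X]) (d : ℕ) (hd : 2 ≤ d) (hQ : Q.natDegree = d) (hP : P.natDegree ≤ d)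
    (hcop : ∀ z, P.eval z = 0 → Q.eval z ≠ 0) (θ : RatFunc ℂ →ₐ[ℂ] RatFunc ℂ)
    (hσ : θ RatFunc.X * algebraMap ℂ[X] (RatFunc ℂ) Q = algebraMap ℂ[X] (RatFunc ℂ) P)
    (f : RatFunc ℂ) (hf : f ≠ 0) (ν : ℤ) (hν : 0 < ν)
    (hinv : θ f * D (θ RatFunc.X) ^ ν = f)
    (hb : HasOrd (P.coeff d / Q.coeff d) f 0) : False := by
  have hQ0 : Q ≠ 0 := by rintro rfl; simp at hQ; lia
  have hQd : Q.coeff d ≠ 0 := by rw [← hQ]; exact leadingCoeff_ne_zero.mpr hQ0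
  have hval : ∀ p q, P.eval p = q * Q.eval p → Reg p (θ RatFunc.X) q := by
    intro p q h
    refine ⟨P, Q, fun h0 => ?_, hσ, h⟩
    rw [h0, mul_zero] at h
    exact hcop p h h0
  have hQne : ∀ p q, P.eval p = q * Q.eval p → Q.eval p ≠ 0 := by
    intro p q h h0
    rw [h0, mul_zero] at h
    exact hcop p h h0
  -- `S` is finite, since `f` has a pole at each of its points, and backward invariant
  obtain ⟨S, hS⟩ : ∃ S : Set ℂ, S = {p | ∃ j, HasOrd p f j ∧ j + ν ≤ 0} := ⟨_, rfl⟩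
  have hSfin : S.Finite := by
    refine (f.denom.roots.toFinset.finite_toSet).subset ?_
    intro p hp
    rw [hS] at hp
    obtain ⟨j, hj, hjν⟩ := hp
    simp only [Finset.mem_coe, Multiset.mem_toFinset, mem_roots (RatFunc.denom_ne_zero f)]
    by_contra h0
    have hreg : Reg p f (f.num.eval p / f.denom.eval p) := by
      have h1 := (Reg.poly p f.num).div (Reg.poly p f.denom) h0
      rwa [RatFunc.num_div_denom] at h1
    have := hj.nonneg hreg
    lia
  have hSback : ∀ p q, q ∈ S → P.eval p = q * Q.eval p → p ∈ S := by
    intro p q hq h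
    rw [hS] at hq ⊢
    obtain ⟨j, hj, hjν⟩ := hq
    obtain ⟨n, hn⟩ := hasOrd_pullback (hval p q h) hj ν
    rw [hinv] at hn
    refine ⟨_, hn, ?_⟩
    have : (0 : ℤ) ≤ n := by positivity
    nlinarith
  have hSdeg : ∀ q ∈ S, (P - C q * Q).natDegree = d := by
    intro q hq
    refine le_antisymm ?_ (le_natDegree_of_ne_zero ?_)
    · refine (natDegree_sub_le _ _).trans (max_le hP ((natDegree_C_mul_le _ _).trans hQ.le))
    · intro h
      have hqb : q = P.coeff d / Q.coeff d := by
        rw [coeff_sub, coeff_C_mul] at h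
        field_simp
        linear_combination -h
      rw [hS] at hq
      obtain ⟨j, hj, hjν⟩ := hq
      rw [hqb] at hj
      have := hj.unique hb
      lia
  have hpre : ∀ q ∈ S, ∃ p ∈ S, P.eval p = q * Q.eval p := by
    intro q hq
    obtain ⟨p, hp⟩ := IsAlgClosed.exists_root (P - C q * Q) (by
      intro h
      have := natDegree_eq_zero_iff_degree_le_zero.mpr h.le
      rw [hSdeg q hq] at this
      lia)
    have hp' : P.eval p = q * Q.eval p := by
      have : (P - C q * Q).eval p = 0 := hp
      simp only [eval_sub, eval_mul, eval_C] at this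
      linear_combination this
    exact ⟨p, hSback p q hq hp', hp'⟩
  have huniq : ∀ p q, q ∈ S → P.eval p = q * Q.eval p → P.eval q = q * Q.eval q → p = q := by
    -- hence the map permutes `S`, and a fixed point in `S` is its own only preimage
    intro p q hq hp hqq
    choose! g hgS hg using hpre
    have hginj : Set.InjOn g S := by
      intro a ha b hb' hab
      have h1 := hg a ha
      have h2 := hg b hb'
      rw [hab] at h1
      exact mul_right_cancel₀ (hQne _ _ h2) (h1.symm.trans h2)
    have hsurj : Set.SurjOn g S S := ((hSfin.injOn_iff_bijOn_of_mapsTo hgS).mp hginj).surjOn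
    have hall : ∀ p, P.eval p = q * Q.eval p → p ∈ S → p = g q := by
      intro p hp hpS
      obtain ⟨a, ha, rfl⟩ := hsurj hpS
      have h1 := hg a ha
      rw [mul_right_cancel₀ (hQne _ _ h1) (hp.symm.trans h1)]
    rw [hall p hp (hSback p q hq hp), ← hall q hqq hq]
  have hX : θ RatFunc.X ≠ RatFunc.X := by
    intro h
    rw [h, ← RatFunc.algebraMap_X, ← map_mul] at hσ
    have h1 := congrArg natDegree (RatFunc.algebraMap_injective ℂ hσ)
    rw [natDegree_X_mul hQ0] at h1
    lia
  -- the multiplier at each fixed point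
  have hfix : ∀ p, P.eval p = p * Q.eval p → ∃ l : ℂ, l ≠ 1 ∧ 1 / 2 ≤ (1 / (1 - l)).re ∧
      (derivative (X * Q - P)).eval p = (1 - l) * Q.eval p := by
    intro p hp
    have hq0 := hQne p p hp
    have hreg := hval p p hp
    obtain ⟨l, hl⟩ := hreg.deriv
    have hder : (derivative (X * Q - P)).eval p = (1 - l) * Q.eval p := by
      have h1 := congrArg D hσ
      rw [Derivation.leibniz, D_algebraMap, D_algebraMap, smul_eq_mul, smul_eq_mul] at h1
      have h2 := (hreg.mul (Reg.poly p (derivative Q))).add ((Reg.poly p Q).mul hl)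
      rw [h1] at h2
      have h3 := h2.unique (Reg.poly p (derivative P))
      simp only [derivative_sub, derivative_mul, derivative_X, eval_sub, eval_add, eval_mul,
        eval_one, eval_X]
      linear_combination h3
    refine ⟨l, ?_⟩
    by_cases hl0 : l = 0
    · subst hl0
      exact ⟨by simp, by norm_num, hder⟩
    obtain ⟨j, hj⟩ := exists_hasOrd p f hf
    by_cases hjν : j + ν ≤ 0
    · exfalso
      have hpS : p ∈ S := by rw [hS]; exact ⟨j, hj, hjν⟩
      have hsd := hSdeg p hpS
      have hT : P - C p * Q = C (P - C p * Q).leadingCoeff * (X - C p) ^ d := by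
        have hsplit : (P - C p * Q).Splits := IsAlgClosed.splits _
        have hrep : (P - C p * Q).roots = Multiset.replicate d p := by
          rw [Multiset.eq_replicate]
          refine ⟨by rw [← hsplit.natDegree_eq_card_roots, hsd], fun z hz => ?_⟩
          have hz' := (mem_roots'.mp hz).2
          simp only [IsRoot.def, eval_sub, eval_mul, eval_C] at hz'
          exact huniq z p hpS (by linear_combination hz') hp
        conv_lhs => rw [hsplit.eq_prod_roots, hrep]
        simp
      have hT' := congrArg (fun A => (derivative A).eval p) hT
      simp only [derivative_C_mul, derivative_X_sub_C_pow, eval_mul, eval_pow, eval_sub, eval_X,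
        eval_C, sub_self, derivative_sub, zero_pow (show d - 1 ≠ 0 by lia), mul_zero] at hT'
      simp only [derivative_sub, derivative_mul, derivative_X, eval_sub, eval_add, eval_mul,
        eval_one, eval_X] at hder
      have : l * Q.eval p = 0 := by linear_combination hT' + hder
      exact (mul_ne_zero hl0 hq0) this
    · push Not at hjν
      have hpow := multiplier_pow hreg hl hl0 hj hinv
      have hl1 : l ≠ 1 := by
        rintro rfl
        exact multiplier_ne_one hreg hX hj hν hjν hinv hl
      have hnorm : ‖l‖ = 1 := by
        obtain ⟨n, hn⟩ := Int.eq_ofNat_of_zero_le hjν.le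
        rw [hn, zpow_natCast] at hpow
        exact Complex.norm_eq_one_of_pow_eq_one hpow (by lia)
      exact ⟨hl1, (re_inv_one_sub hnorm hl1).ge, hder⟩
  have hfixR : ∀ p, (X * Q - P).eval p = 0 → P.eval p = p * Q.eval p := by
    intro p h
    simp only [eval_sub, eval_mul, eval_X] at h
    linear_combination -h
  obtain ⟨s, hcard, hsroot, hsum⟩ := fixed_point_formula P Q d hQ hQ0 hP (by
    intro z hz
    obtain ⟨l, hl1, -, hder⟩ := hfix z (hfixR z hz)
    rw [hder]
    exact mul_ne_zero (sub_ne_zero.mpr hl1.symm) (hQne z z (hfixR z hz)))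
  have hre : ∑ z ∈ s, (1 / 2 : ℝ) ≤
      ∑ z ∈ s, (Q.eval z / (derivative (X * Q - P)).eval z).re := by
    refine Finset.sum_le_sum fun z hz => ?_
    have hz' := hfixR z (hsroot z hz)
    obtain ⟨l, hl1, hle, hder⟩ := hfix z hz'
    have hq0 := hQne z z hz'
    have h1 : (1 - l) ≠ 0 := sub_ne_zero.mpr hl1.symm
    have e : Q.eval z / ((1 - l) * Q.eval z) = 1 / (1 - l) := by field_simp
    rw [hder, e]
    exact hle
  rw [← Complex.re_sum, hsum, Finset.sum_const, hcard] at hre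
  simp at hre
  have : (2 : ℝ) ≤ d := by exact_mod_cast hd
  linarith

/-! ### Change of coordinate -/

lemma hom_ext {θ θ' : RatFunc ℂ →ₐ[ℂ] RatFunc ℂ} (h : θ RatFunc.X = θ' RatFunc.X)
    (x : RatFunc ℂ) : θ x = θ' x := by
  obtain ⟨a, b, -, rfl⟩ := exists_frac x
  rw [map_div₀, map_div₀, hom_algebraMap, hom_algebraMap, hom_algebraMap, hom_algebraMap, h]

/-- The polynomial `t ^ d * A(c + 1 / t)`, for `deg A ≤ d`. -/
noncomputable def rev (d : ℕ) (c : ℂ) (A : ℂ[X]) : ℂ[X] := reflect d (taylor c A)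

lemma aeval_rev {L : Type*} [Field L] [Algebra ℂ L] {d : ℕ} (c : ℂ) {A : ℂ[X]}
    (hA : A.natDegree ≤ d) {y : L} (hy : y ≠ 0) :
    aeval y (rev d c A) = y ^ d * aeval (algebraMap ℂ L c + y⁻¹) A := by
  let _ : Invertible (y⁻¹) := invertibleOfNonzero (inv_ne_zero hy)
  have h := eval₂_reflect_mul_pow (algebraMap ℂ L) (y⁻¹) d (taylor c A)
    (by rwa [natDegree_taylor])
  rw [invOf_eq_inv, inv_inv] at h
  have h2 : eval₂ (algebraMap ℂ L) y⁻¹ (taylor c A) = aeval (algebraMap ℂ L c + y⁻¹) A := by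
    rw [taylor_apply, eval₂_comp, aeval_def]
    simp [add_comm]
  rw [← h2, ← h, rev, aeval_def, inv_pow]
  field_simp

lemma coeff_rev (d : ℕ) (c : ℂ) (A : ℂ[X]) : (rev d c A).coeff d = A.eval c := by
  rw [rev, coeff_reflect, revAt_le le_rfl, Nat.sub_self, taylor_coeff_zero]

lemma natDegree_rev_le {d : ℕ} (c : ℂ) {A : ℂ[X]} (hA : A.natDegree ≤ d) :
    (rev d c A).natDegree ≤ d := by
  rw [natDegree_le_iff_coeff_eq_zero]
  intro n hn
  rw [rev, coeff_reflect, revAt_eq_self_of_lt hn]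
  exact coeff_eq_zero_of_natDegree_lt (by rw [natDegree_taylor]; lia)

lemma eval_zero_rev {d : ℕ} (hd : d ≠ 0) (c : ℂ) {A : ℂ[X]} (hA : A.natDegree = d) :
    (rev d c A).eval 0 ≠ 0 := by
  rw [← coeff_zero_eq_eval_zero, rev, coeff_reflect, revAt_le (Nat.zero_le _), Nat.sub_zero]
  have h : (taylor c A).natDegree = d := by rw [natDegree_taylor, hA]
  rw [← h]
  refine leadingCoeff_ne_zero.mpr fun h0 => hd ?_
  rw [← h, h0, natDegree_zero]

/-- The result for positive weight. The coordinate is changed by `t ↦ c + 1 / t`, with `c` chosen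
so that the new point at infinity is not fixed and is mapped to a point where the form has neither
a zero nor a pole. -/
theorem positive_weight (P Q : ℂ[X]) (d : ℕ) (hd : 2 ≤ d)
    (hdeg : max P.natDegree Q.natDegree = d) (hcop : IsCoprime P Q)
    (θ : RatFunc ℂ →ₐ[ℂ] RatFunc ℂ)
    (hσ : θ RatFunc.X * algebraMap ℂ[X] (RatFunc ℂ) Q = algebraMap ℂ[X] (RatFunc ℂ) P)
    (hnc : ∀ k : ℂ, θ RatFunc.X ≠ algebraMap ℂ (RatFunc ℂ) k)
    (f : RatFunc ℂ) (hf : f ≠ 0) (ν : ℤ) (hν : 0 < ν)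
    (hinv : θ f * D (θ RatFunc.X) ^ ν = f) : False := by
  have hPd : P.natDegree ≤ d := hdeg ▸ le_max_left _ _
  have hQd : Q.natDegree ≤ d := hdeg ▸ le_max_right _ _
  have hcop' : ∀ z, P.eval z = 0 → Q.eval z ≠ 0 := by
    intro z h1 h2
    obtain ⟨a, b, h⟩ := hcop
    have := congrArg (eval z) h
    simp [h1, h2] at this
  have hQ0 : Q ≠ 0 := by
    rintro rfl
    have h := natDegree_eq_zero_of_isUnit (isCoprime_zero_right.mp hcop)
    simp [h] at hdeg
    lia
  have hQK : algebraMap ℂ[X] (RatFunc ℂ) Q ≠ 0 := RatFunc.algebraMap_ne_zero hQ0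
  have hne1 : P - X * Q ≠ 0 := by
    intro h
    have hP : P = X * Q := sub_eq_zero.mp h
    have hu : IsUnit Q := hcop.isUnit_of_dvd' ⟨X, by rw [hP, mul_comm]⟩ dvd_rfl
    have h0 := natDegree_eq_zero_of_isUnit hu
    have h1 : P.natDegree = 1 := by rw [hP, natDegree_X_mul hQ0, h0]
    rw [h0, h1] at hdeg
    simp at hdeg
    lia
  have hne2 : ∀ a : ℂ, P - C a * Q ≠ 0 := by
    intro a h
    apply hnc a
    apply mul_right_cancel₀ hQK
    rw [hσ, sub_eq_zero.mp h, map_mul, IsScalarTower.algebraMap_apply ℂ ℂ[X] (RatFunc ℂ)]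
    rfl
  -- a generic point `c`
  obtain ⟨c, hc⟩ : ∃ c, ((P - X * Q) * Q *
      ∏ a ∈ (f.num * f.denom).roots.toFinset, (P - C a * Q)).eval c ≠ 0 := by
    by_contra! h
    have hG : (P - X * Q) * Q *
        ∏ a ∈ (f.num * f.denom).roots.toFinset, (P - C a * Q) ≠ 0 :=
      mul_ne_zero (mul_ne_zero hne1 hQ0) (Finset.prod_ne_zero_iff.mpr fun a _ => hne2 a)
    exact hG (Polynomial.funext fun c => by rw [h c, eval_zero])
  rw [eval_mul, eval_mul, mul_ne_zero_iff, mul_ne_zero_iff, eval_prod,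
    Finset.prod_ne_zero_iff] at hc
  obtain ⟨⟨hc1, hc2⟩, hc3⟩ := hc
  have hc1' : P.eval c - c * Q.eval c ≠ 0 := by simpa using hc1
  have hnum0 : f.num * f.denom ≠ 0 :=
    mul_ne_zero (RatFunc.num_ne_zero hf) (RatFunc.denom_ne_zero f)
  have hw : (f.num * f.denom).eval (P.eval c / Q.eval c) ≠ 0 := by
    intro h
    refine hc3 _ (Multiset.mem_toFinset.mpr ((mem_roots hnum0).mpr h)) ?_
    simp only [eval_sub, eval_mul, eval_C]
    field_simp
    ring
  rw [eval_mul, mul_ne_zero_iff] at hw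
  -- the change of coordinate and the conjugated map
  have hX0 : (RatFunc.X : RatFunc ℂ) ≠ 0 := RatFunc.X_ne_zero
  have hXnc : ∀ k : ℂ, (RatFunc.X : RatFunc ℂ) ≠ algebraMap ℂ (RatFunc ℂ) k := by
    intro k h
    have := par_ne_zero k
    rw [par_eq, h, sub_self] at this
    exact this rfl
  obtain ⟨Φ, hΦ, -⟩ := exists_subst (algebraMap ℂ (RatFunc ℂ) c + RatFunc.X⁻¹) (by
    rintro ⟨k, hk⟩
    apply hXnc ((k - c)⁻¹)
    have hk' : algebraMap ℂ (RatFunc ℂ) c + RatFunc.X⁻¹ = algebraMap ℂ (RatFunc ℂ) k := hk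
    rw [map_inv₀, map_sub, ← hk']
    simp)
  have hΦσ : ∀ k : ℂ, Φ (θ RatFunc.X) ≠ algebraMap ℂ (RatFunc ℂ) k := by
    intro k h
    rw [← Φ.commutes k] at h
    exact hnc k (Φ.toRingHom.injective h)
  have hden : Φ (θ RatFunc.X) - algebraMap ℂ (RatFunc ℂ) c ≠ 0 := sub_ne_zero.mpr (hΦσ c)
  obtain ⟨θ₁, hθ₁, -⟩ := exists_subst (Φ (θ RatFunc.X) - algebraMap ℂ (RatFunc ℂ) c)⁻¹ (by
    rintro ⟨k, hk⟩
    apply hΦσ (c + k⁻¹)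
    have hk' : (Φ (θ RatFunc.X) - algebraMap ℂ (RatFunc ℂ) c)⁻¹ = algebraMap ℂ (RatFunc ℂ) k := hk
    rw [map_add, map_inv₀, ← hk', inv_inv]
    ring)
  have hconj : ∀ x, θ₁ (Φ x) = Φ (θ x) := by
    refine hom_ext (θ := θ₁.comp Φ) (θ' := Φ.comp θ) ?_
    rw [AlgHom.comp_apply, AlgHom.comp_apply, hΦ, map_add, AlgHom.commutes, map_inv₀, hθ₁, inv_inv]
    ring
  have hinv₁ : θ₁ (Φ f * D (Φ RatFunc.X) ^ ν) * D (θ₁ RatFunc.X) ^ ν =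
      Φ f * D (Φ RatFunc.X) ^ ν := by
    have h1 := chain_rule θ₁ (Φ RatFunc.X)
    have h2 := chain_rule Φ (θ RatFunc.X)
    rw [hconj, h2] at h1
    rw [map_mul, map_zpow₀, hconj, mul_assoc, ← mul_zpow, ← h1, mul_zpow, ← mul_assoc, ← map_zpow₀,
      ← map_mul, hinv]
  have hrevK : ∀ A : ℂ[X], A.natDegree ≤ d → algebraMap ℂ[X] (RatFunc ℂ) (rev d c A) =
      RatFunc.X ^ d * Φ (algebraMap ℂ[X] (RatFunc ℂ) A) := by
    intro A hA
    rw [← RatFunc.aeval_X_left_eq_algebraMap, aeval_rev c hA hX0, hom_algebraMap, hΦ]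
  have hcoefQ : (rev d c P - C c * rev d c Q).coeff d = P.eval c - c * Q.eval c := by
    rw [coeff_sub, coeff_C_mul, coeff_rev, coeff_rev]
  have hDφ : D (Φ RatFunc.X) = -(RatFunc.X⁻¹) ^ 2 := by
    have hDX : D RatFunc.X = 1 := by
      rw [← RatFunc.algebraMap_X, D_algebraMap]; simp
    rw [hΦ, map_add, Derivation.map_algebraMap, Derivation.leibniz_inv, hDX]
    simp
  have hDφ0 : D (Φ RatFunc.X) ≠ 0 := by
    rw [hDφ]; exact neg_ne_zero.mpr (pow_ne_zero _ (inv_ne_zero hX0))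
  refine core (rev d c Q) (rev d c P - C c * rev d c Q) d hd ?_ (natDegree_rev_le c hQd) ?_ θ₁ ?_
    (Φ f * D (Φ RatFunc.X) ^ ν)
    (mul_ne_zero (by simpa using hf) (zpow_ne_zero _ hDφ0)) ν hν hinv₁ ?_
  · refine le_antisymm ?_ (le_natDegree_of_ne_zero (by rwa [hcoefQ]))
    exact (natDegree_sub_le _ _).trans (max_le (natDegree_rev_le c hPd)
      ((natDegree_C_mul_le _ _).trans (natDegree_rev_le c hQd)))
  · intro z h1 h2
    have h3 : (rev d c P).eval z = 0 := by
      rw [eval_sub, eval_mul, h1, mul_zero, sub_zero] at h2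
      exact h2
    by_cases hz : z = 0
    · subst hz
      rcases max_choice P.natDegree Q.natDegree with h | h
      · exact eval_zero_rev (by lia) c (h.symm.trans hdeg) h3
      · exact eval_zero_rev (by lia) c (h.symm.trans hdeg) h1
    · have hP := aeval_rev c hPd hz
      have hQ := aeval_rev c hQd hz
      rw [coe_aeval_eq_eval, h3, coe_aeval_eq_eval] at hP
      rw [coe_aeval_eq_eval, h1, coe_aeval_eq_eval] at hQ
      have hzd := pow_ne_zero d hz
      exact hcop' _ ((mul_eq_zero.mp hP.symm).resolve_left hzd)
        ((mul_eq_zero.mp hQ.symm).resolve_left hzd)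
  · have h := congrArg Φ hσ
    rw [map_mul] at h
    have hC : algebraMap ℂ[X] (RatFunc ℂ) (C c) = algebraMap ℂ (RatFunc ℂ) c := by
      rw [IsScalarTower.algebraMap_apply ℂ ℂ[X] (RatFunc ℂ)]; rfl
    rw [hθ₁, map_sub, map_mul, hrevK P hPd, hrevK Q hQd, ← h, hC]
    field_simp
  · rw [hcoefQ, coeff_rev]
    have hb0 : Q.eval c / (P.eval c - c * Q.eval c) ≠ 0 := div_ne_zero hc2 hc1'
    generalize hbb : Q.eval c / (P.eval c - c * Q.eval c) = b at hb0
    have hval : P.eval c / Q.eval c = c + b⁻¹ := by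
      rw [← hbb]; field_simp; ring
    have hφ : Reg b (Φ RatFunc.X) (P.eval c / Q.eval c) := by
      rw [hval, hΦ]
      exact (Reg.const b c).add ((Reg.X b).inv hb0)
    have hfreg := (Reg.poly _ f.num).div (Reg.poly (P.eval c / Q.eval c) f.denom) hw.2
    rw [RatFunc.num_div_denom] at hfreg
    have hD : Reg b (D (Φ RatFunc.X)) (-(b⁻¹) ^ 2) := by
      rw [hDφ]; exact (((Reg.X b).inv hb0).pow 2).neg
    have hv : (-(b⁻¹) ^ 2 : ℂ) ≠ 0 := neg_ne_zero.mpr (pow_ne_zero _ (inv_ne_zero hb0))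
    exact ⟨_, _, mul_ne_zero (div_ne_zero hw.1 hw.2) (zpow_ne_zero ν hv),
      (hφ.subst hfreg).mul (hD.zpow hv ν), by simp⟩

end InvForm

open InvForm in
/-- A complex rational map of degree at least 2 admits no nonzero invariant form
of nonzero weight. -/
theorem no_invariant_forms_over_C (σ : RatFunc ℂ) (d : ℕ) (hd : 2 ≤ d)
    (hdeg : ratDegree σ = d) (f : RatFunc ℂ) (ν : ℤ) (hν : ν ≠ 0)
    (hinv : ratComp f σ * (ratDeriv σ) ^ ν = f) :
    f = 0 := by
  by_contra hf
  have hnc : ¬ ∃ k : ℂ, σ = RatFunc.C k := by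
    rintro ⟨k, rfl⟩
    simp [ratDegree] at hdeg
    lia
  obtain ⟨θ, hθ, hcomp⟩ := exists_subst σ hnc
  have hσ : θ RatFunc.X * algebraMap ℂ[X] (RatFunc ℂ) σ.denom =
      algebraMap ℂ[X] (RatFunc ℂ) σ.num := by
    rw [hθ, ← div_eq_iff (RatFunc.algebraMap_ne_zero (RatFunc.denom_ne_zero σ)) |>.mp
      (RatFunc.num_div_denom σ)]
  have hnc' : ∀ k : ℂ, θ RatFunc.X ≠ algebraMap ℂ (RatFunc ℂ) k := by
    intro k h
    exact hnc ⟨k, hθ.symm.trans h⟩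
  rw [hcomp, ← D_apply, ← hθ] at hinv
  rcases lt_or_gt_of_ne hν with h | h
  -- in negative weight, `1 / f` is invariant of positive weight
  · refine positive_weight σ.num σ.denom d hd hdeg (RatFunc.isCoprime_num_denom σ) θ hσ hnc' f⁻¹
      (inv_ne_zero hf) (-ν) (by lia) ?_
    rw [map_inv₀, zpow_neg, ← mul_inv, hinv]
  · exact positive_weight σ.num σ.denom d hd hdeg (RatFunc.isCoprime_num_denom σ) θ hσ hnc' f hf ν
      h hinv
end

section
/- Let k be a field of characteristic p ≥ 0 and let σ ∈ k(t) be nonconstant. Let b ∈ k be a point at which σ is regular (σ.denom.eval b ≠ 0), set a := σ(b) (the evaluation of σ at b), and let e := ord_b(σ − C a) be the ramification index of σ at b; assume p does not divide e. Then for every nonzero f ∈ k(t) and every ν ∈ ℤ, the rational function (f ∘ σ) · (σ')^ν is nonzero and ord_b((f ∘ σ) · (σ')^ν) + ν = e · (ord_a(f) + ν). -/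
/-!
The order `ratOrd b` is a homomorphism from the nonzero rational functions to `ℤ`
(`ratOrd_mul`, `ratOrd_zpow`), computed by any fraction of polynomials (`ratOrd_div`). So the
formula splits into two parts, `ord_b (f ∘ σ) = e * ord_a f` and `ord_b σ' = e - 1`.

For the first, a nonzero polynomial is `P = (X - a)^n * Q` with `Q(a) ≠ 0`; then
`P(σ) = (σ - a)^n * Q(σ)`, and `Q(σ)` is regular at `b` with value `Q(a) ≠ 0`, hence of order zero
(`ord_aeval`). For the second, write `σ - a = M / D` with `M = (X - b)^e * Q`, `Q(b) ≠ 0`. Then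
`σ' = (M' D - M D') / D^2`, whose numerator is `(X - b)^(e-1) * R` with `R(b) = e * Q(b) * D(b)`,
which is nonzero because the characteristic does not divide `e` (`ord_deriv`).
-/


open Polynomial

section Order

variable {k : Type*} [Field k]

lemma ratOrd_div (b : k) {P Q : k[X]} (hP : P ≠ 0) (hQ : Q ≠ 0) :
    ratOrd b (algebraMap k[X] (RatFunc k) P / algebraMap k[X] (RatFunc k) Q) =
      (P.rootMultiplicity b : ℤ) - Q.rootMultiplicity b := by
  set h := algebraMap k[X] (RatFunc k) P / algebraMap k[X] (RatFunc k) Q with hh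
  have hP' := RatFunc.algebraMap_ne_zero hP
  have hQ' := RatFunc.algebraMap_ne_zero hQ
  have hne : h ≠ 0 := div_ne_zero hP' hQ'
  have hd' := RatFunc.algebraMap_ne_zero h.denom_ne_zero
  have hn : h.num ≠ 0 := RatFunc.num_ne_zero hne
  have key : h.num * Q = P * h.denom := by
    apply RatFunc.algebraMap_injective k
    rw [map_mul, map_mul, ← div_eq_div_iff hd' hQ', RatFunc.num_div_denom]
  have := congrArg (rootMultiplicity b) key
  rw [rootMultiplicity_mul (mul_ne_zero hn hQ),
    rootMultiplicity_mul (mul_ne_zero hP h.denom_ne_zero)] at this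
  unfold ratOrd
  omega

lemma ratOrd_mul (b : k) {f g : RatFunc k} (hf : f ≠ 0) (hg : g ≠ 0) :
    ratOrd b (f * g) = ratOrd b f + ratOrd b g := by
  have hfn := RatFunc.num_ne_zero hf
  have hgn := RatFunc.num_ne_zero hg
  have hfd := f.denom_ne_zero
  have hgd := g.denom_ne_zero
  have : f * g = algebraMap k[X] (RatFunc k) (f.num * g.num) /
      algebraMap k[X] (RatFunc k) (f.denom * g.denom) := by
    rw [map_mul, map_mul, ← div_mul_div_comm, RatFunc.num_div_denom, RatFunc.num_div_denom]
  rw [this, ratOrd_div b (mul_ne_zero hfn hgn) (mul_ne_zero hfd hgd),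
    rootMultiplicity_mul (mul_ne_zero hfn hgn), rootMultiplicity_mul (mul_ne_zero hfd hgd)]
  unfold ratOrd
  push_cast
  ring

lemma ratOrd_one (b : k) : ratOrd b 1 = 0 := by
  simp [ratOrd]

lemma ratOrd_inv (b : k) {f : RatFunc k} (hf : f ≠ 0) : ratOrd b f⁻¹ = -ratOrd b f := by
  have := ratOrd_mul b hf (inv_ne_zero hf)
  rw [mul_inv_cancel₀ hf, ratOrd_one] at this
  omega

lemma ratOrd_pow (b : k) {f : RatFunc k} (hf : f ≠ 0) (n : ℕ) :
    ratOrd b (f ^ n) = n * ratOrd b f := by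
  induction n with
  | zero => simp [ratOrd_one]
  | succ n ih =>
    rw [pow_succ, ratOrd_mul b (pow_ne_zero n hf) hf, ih]
    push_cast
    ring

lemma ratOrd_zpow (b : k) {f : RatFunc k} (hf : f ≠ 0) (n : ℤ) :
    ratOrd b (f ^ n) = n * ratOrd b f := by
  obtain ⟨m, rfl | rfl⟩ := n.eq_nat_or_neg
  · rw [zpow_natCast, ratOrd_pow b hf]
  · rw [zpow_neg, zpow_natCast, ratOrd_inv b (pow_ne_zero m hf), ratOrd_pow b hf]
    ring

/-- `h` is regular at `b` with value `c`, witnessed by a fraction that need not be reduced. -/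
def HasVal (b : k) (h : RatFunc k) (c : k) : Prop :=
  ∃ u v : k[X], v.eval b ≠ 0 ∧ u.eval b = c * v.eval b ∧
    h = algebraMap k[X] (RatFunc k) u / algebraMap k[X] (RatFunc k) v

lemma ne_zero_of_eval_ne_zero {b : k} {v : k[X]} (hv : v.eval b ≠ 0) : v ≠ 0 := by
  rintro rfl
  simp at hv

lemma HasVal.const (b c : k) : HasVal b (algebraMap k (RatFunc k) c) c :=
  ⟨C c, 1, by simp, by simp, by simp [RatFunc.algebraMap_eq_C]⟩

lemma HasVal.add {b c d : k} {g h : RatFunc k} (hg : HasVal b g c) (hh : HasVal b h d) :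
    HasVal b (g + h) (c + d) := by
  obtain ⟨u, v, hv, huv, rfl⟩ := hg
  obtain ⟨u', v', hv', huv', rfl⟩ := hh
  refine ⟨u * v' + v * u', v * v', by simp [hv, hv'], ?_, ?_⟩
  · simp only [eval_add, eval_mul, huv, huv']
    ring
  · rw [div_add_div _ _ (RatFunc.algebraMap_ne_zero (ne_zero_of_eval_ne_zero hv))
      (RatFunc.algebraMap_ne_zero (ne_zero_of_eval_ne_zero hv'))]
    simp only [map_add, map_mul]

lemma HasVal.mul {b c d : k} {g h : RatFunc k} (hg : HasVal b g c) (hh : HasVal b h d) :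
    HasVal b (g * h) (c * d) := by
  obtain ⟨u, v, hv, huv, rfl⟩ := hg
  obtain ⟨u', v', hv', huv', rfl⟩ := hh
  refine ⟨u * u', v * v', by simp [hv, hv'], ?_, ?_⟩
  · simp only [eval_mul, huv, huv']
    ring
  · rw [div_mul_div_comm]
    simp only [map_mul]

lemma HasVal.aeval {b a : k} {σ : RatFunc k} (h : HasVal b σ a) (Q : k[X]) :
    HasVal b (Polynomial.aeval σ Q) (Q.eval a) := by
  induction Q using Polynomial.induction_on with
  | C c => simpa using HasVal.const b c
  | add p q hp hq => simpa using hp.add hq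
  | monomial n c ih =>
    have := ih.mul h
    simpa [pow_succ, mul_assoc] using this

lemma HasVal.ord {b c : k} {h : RatFunc k} (hh : HasVal b h c) (hc : c ≠ 0) :
    h ≠ 0 ∧ ratOrd b h = 0 := by
  obtain ⟨u, v, hv, huv, rfl⟩ := hh
  have hu : u.eval b ≠ 0 := by rw [huv]; exact mul_ne_zero hc hv
  have hu0 := ne_zero_of_eval_ne_zero hu
  have hv0 := ne_zero_of_eval_ne_zero hv
  refine ⟨div_ne_zero (RatFunc.algebraMap_ne_zero hu0) (RatFunc.algebraMap_ne_zero hv0), ?_⟩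
  rw [ratOrd_div b hu0 hv0, rootMultiplicity_eq_zero hu, rootMultiplicity_eq_zero hv]
  simp

lemma ord_aeval {b a : k} {σ : RatFunc k} (h : HasVal b σ a) (hσ : σ - RatFunc.C a ≠ 0)
    {P : k[X]} (hP : P ≠ 0) :
    aeval σ P ≠ 0 ∧ ratOrd b (aeval σ P) = P.rootMultiplicity a * ratOrd b (σ - RatFunc.C a) := by
  obtain ⟨Q, hQ, hQa⟩ := exists_eq_pow_rootMultiplicity_mul_and_not_dvd P hP a
  rw [dvd_iff_isRoot, IsRoot.def] at hQa
  obtain ⟨h1, h2⟩ := (h.aeval Q).ord hQa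
  have key : aeval σ P = (σ - RatFunc.C a) ^ P.rootMultiplicity a * aeval σ Q := by
    conv_lhs => rw [hQ]
    simp [RatFunc.algebraMap_eq_C]
  rw [key]
  exact ⟨mul_ne_zero (pow_ne_zero _ hσ) h1, by
    rw [ratOrd_mul b (pow_ne_zero _ hσ) h1, ratOrd_pow b hσ, h2, add_zero]⟩

/-- Tame ramification: the derivative loses exactly one order of vanishing. -/
lemma ord_deriv (p : ℕ) [CharP k p] {b a : k} {σ : RatFunc k} (hb : σ.denom.eval b ≠ 0)
    (hval : σ.num.eval b = a * σ.denom.eval b) (hσ : σ - RatFunc.C a ≠ 0)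
    (hpe : ¬ ((p : ℤ) ∣ ratOrd b (σ - RatFunc.C a))) :
    ratDeriv σ ≠ 0 ∧ ratOrd b (ratDeriv σ) = ratOrd b (σ - RatFunc.C a) - 1 := by
  set D := σ.denom with hD
  set N := σ.num with hN
  have hD0 : D ≠ 0 := ne_zero_of_eval_ne_zero hb
  have hD' := RatFunc.algebraMap_ne_zero hD0
  have hsub : σ - RatFunc.C a = algebraMap k[X] (RatFunc k) (N - C a * D) /
      algebraMap k[X] (RatFunc k) D := by
    rw [map_sub, map_mul, sub_div, mul_div_assoc, div_self hD', mul_one, RatFunc.num_div_denom,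
      RatFunc.algebraMap_C]
  have hM0 : N - C a * D ≠ 0 := by
    intro h0
    rw [h0] at hsub
    simp at hsub
    exact hσ hsub
  obtain ⟨Q, hQ, hQb⟩ := exists_eq_pow_rootMultiplicity_mul_and_not_dvd _ hM0 b
  rw [dvd_iff_isRoot, IsRoot.def] at hQb
  have hpos : 0 < (N - C a * D).rootMultiplicity b := by
    rw [rootMultiplicity_pos hM0]
    simp [IsRoot.def, hval]
  have hord : ratOrd b (σ - RatFunc.C a) = (N - C a * D).rootMultiplicity b := by
    rw [hsub, ratOrd_div b hM0 hD0, rootMultiplicity_eq_zero hb]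
    simp
  rw [hord] at hpe ⊢
  generalize (N - C a * D).rootMultiplicity b = m at *
  obtain ⟨n, rfl⟩ : ∃ n, m = n + 1 := ⟨m - 1, by omega⟩
  have hcast : ((n + 1 : ℕ) : k) ≠ 0 := by
    rw [Ne, CharP.cast_eq_zero_iff k p]
    exact_mod_cast hpe
  set R := (C ((n + 1 : ℕ) : k) * Q + (X - C b) * derivative Q) * D -
    (X - C b) * Q * derivative D with hR
  have hRb : R.eval b ≠ 0 := by
    have : R.eval b = ((n + 1 : ℕ) : k) * Q.eval b * D.eval b := by simp [hR]
    rw [this]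
    exact mul_ne_zero (mul_ne_zero hcast hQb) hb
  have hnum : derivative N * D - N * derivative D = (X - C b) ^ n * R := by
    have hNe : N = (X - C b) ^ (n + 1) * Q + C a * D := by rw [← hQ]; ring
    have hNd : derivative N = C ((n + 1 : ℕ) : k) * (X - C b) ^ n * Q
        + (X - C b) ^ (n + 1) * derivative Q + C a * derivative D := by
      rw [hNe]
      simp [derivative_X_sub_C_pow]
    rw [hNd, hR]
    conv_lhs => rw [hNe]
    ring
  have hR0 := ne_zero_of_eval_ne_zero hRb
  have hXR : (X - C b) ^ n * R ≠ 0 := mul_ne_zero (pow_ne_zero _ (X_sub_C_ne_zero b)) hR0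
  have hDb : (D ^ 2).eval b ≠ 0 := by simp [hb]
  have hD2 := ne_zero_of_eval_ne_zero hDb
  unfold ratDeriv
  rw [← hD, ← hN, hnum]
  refine ⟨div_ne_zero (RatFunc.algebraMap_ne_zero hXR) (RatFunc.algebraMap_ne_zero hD2), ?_⟩
  rw [ratOrd_div b hXR hD2, rootMultiplicity_eq_zero hDb, rootMultiplicity_mul hXR,
    rootMultiplicity_X_sub_C_pow, rootMultiplicity_eq_zero hRb]
  simp

end Order

/-- Order formula for the pullback of the ν-tuple form `ω = f (dt)^ν` under `σ`
at a tamely ramified point (Lemma 2.2). -/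
theorem ord_pullback_form {k : Type*} [Field k] (p : ℕ) [CharP k p]
    (σ : RatFunc k) (hσ : RatFuncNonconst σ)
    (b : k) (hb : σ.denom.eval b ≠ 0)
    (a : k) (ha : a = RatFunc.eval (RingHom.id k) b σ)
    (e : ℤ) (he : e = ratOrd b (σ - RatFunc.C a)) (hpe : ¬ ((p : ℤ) ∣ e))
    (f : RatFunc k) (hf : f ≠ 0) (ν : ℤ) :
    ratComp f σ * (ratDeriv σ) ^ ν ≠ 0 ∧
      ratOrd b (ratComp f σ * (ratDeriv σ) ^ ν) + ν = e * (ratOrd a f + ν) := by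
  have hσa : σ - RatFunc.C a ≠ 0 := fun h => hσ ⟨a, sub_eq_zero.mp h⟩
  have hval : σ.num.eval b = a * σ.denom.eval b := by
    rw [ha, RatFunc.eval, ← eval, ← eval, div_mul_cancel₀ _ hb]
  have hv : HasVal b σ a := ⟨σ.num, σ.denom, hb, hval, (RatFunc.num_div_denom σ).symm⟩
  subst he
  obtain ⟨hd0, hd⟩ := ord_deriv p hb hval hσa hpe
  obtain ⟨hn0, hn⟩ := ord_aeval hv hσa (RatFunc.num_ne_zero hf)
  obtain ⟨hq0, hq⟩ := ord_aeval hv hσa f.denom_ne_zero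
  have hc0 : ratComp f σ ≠ 0 := div_ne_zero hn0 hq0
  refine ⟨mul_ne_zero hc0 (zpow_ne_zero _ hd0), ?_⟩
  rw [ratOrd_mul b hc0 (zpow_ne_zero _ hd0), ratOrd_zpow b hd0, hd, ratComp, div_eq_mul_inv,
    ratOrd_mul b hn0 (inv_ne_zero hq0), ratOrd_inv b hq0, hn, hq]
  unfold ratOrd
  ring
end

section
/- Let k be an algebraically closed field of characteristic p ∉ {2, 3} and let σ ∈ k(t) be a tamely ramified rational function of degree d ≥ 2. Suppose σ admits a nonzero semi-invariant form of weight one, i.e., there exist f ∈ k(t), f ≠ 0, and λ ∈ kˣ with (f ∘ σ) · σ' = λ · f. Then σ is conjugate to t^d or to t^{−d}: there exist Möbius transformations φ, ψ ∈ k(t) with φ ∘ ψ = X = ψ ∘ φ such that ψ ∘ σ ∘ φ = X^d or ψ ∘ σ ∘ φ = X^{−d}. -/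
/-!
Let `ω = f dt`, so that `σ^* ω = λ ω`. Tameness gives, at every point `P` with ramification index
`e`, the rule `ord_P ω + 1 = e (ord_{σ P} ω + 1)` (`RatDyn.ratOrd_rule`). Hence the finite set `S`
of zeros and poles of `ω` satisfies `σ⁻¹(S) ⊆ S`. As `σ` is surjective, it permutes `S`, and each
point of `S` is the only point of its fibre, that is, totally ramified with index `d`. So
`ord ω + 1` gets multiplied by `d ≥ 2` along a permutation of a finite set and must vanish: `S`
consists of simple poles, and `deg ω = -2` shows that there are exactly two of them
(`RatDyn.two_points`). Moving these two points to `0` and `∞` turns `σ` into `c t^d` or `c t^{-d}`,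
and a scaling by a suitable root in `k` removes the constant (`RatDyn.conj_power_of_two_points`).

To avoid a separate treatment of `∞`, `σ` is first conjugated by `1 / (t - c)` with `c` chosen so
that `ω` has order zero at `c` and at `σ(c)` (`RatDyn.conj_power`). Local orders are handled by the
predicates `ValAt` (regular at a point, with given value) and `OrdAt` (a power of `t - a` times a
local unit), which behave well under composition and differentiation.
-/

open Polynomial

/-- A Möbius transformation: a rational function admitting a compositional inverse. -/
def IsMobius {k : Type*} [Field k] (φ : RatFunc k) : Prop :=
  ∃ ψ : RatFunc k, ratComp φ ψ = RatFunc.X ∧ ratComp ψ φ = RatFunc.X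

/-- `σ` is tamely ramified (in characteristic `p`): either `p = 0`, or `p > 0` and at
every point of the projective line (reached via a Möbius change of coordinates) the
ramification index is prime to `p`. -/
def TamelyRamified {k : Type*} [Field k] (p : ℕ) (σ : RatFunc k) : Prop :=
  p = 0 ∨ (0 < p ∧ ∀ φ ψ : RatFunc k, ratComp φ ψ = RatFunc.X → ratComp ψ φ = RatFunc.X →
    ∀ a : k, (ratComp (ratComp ψ σ) φ).denom.eval a ≠ 0 →
      ¬ ((p : ℤ) ∣ ratOrd a (ratComp (ratComp ψ σ) φ -
          RatFunc.C (RatFunc.eval (RingHom.id k) a (ratComp (ratComp ψ σ) φ)))))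

namespace RatDyn

variable {k : Type*} [Field k]

/-! ### Composition and derivation -/

/-- Substitution of a nonconstant `g`, as a `k`-algebra endomorphism of `k(t)`. -/
noncomputable def compHom (g : RatFunc k) (hg : RatFuncNonconst g) :
    RatFunc k →ₐ[k] RatFunc k :=
  RatFunc.liftAlgHom (Polynomial.aeval g) (by
    intro P hP
    rw [Submonoid.mem_comap, mem_nonZeroDivisors_iff_ne_zero]
    have h := transcendental_iff.1 (RatFunc.transcendental_of_ne_C g hg) P
    exact fun h0 => (mem_nonZeroDivisors_iff_ne_zero.1 hP) (h h0))

theorem compHom_apply (g : RatFunc k) (hg : RatFuncNonconst g) (f : RatFunc k) :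
    compHom g hg f = ratComp f g := by
  simp [compHom, ratComp, RatFunc.liftAlgHom_apply]

theorem compHom_algebraMap (g : RatFunc k) (hg : RatFuncNonconst g) (P : k[X]) :
    compHom g hg (algebraMap k[X] (RatFunc k) P) = aeval g P := by
  rw [compHom_apply]
  simp [ratComp]

theorem compHom_C (g : RatFunc k) (hg : RatFuncNonconst g) (c : k) :
    compHom g hg (RatFunc.C c) = RatFunc.C c := by
  simpa using (compHom g hg).commutes c

theorem compHom_X (g : RatFunc k) (hg : RatFuncNonconst g) :
    compHom g hg RatFunc.X = g := by
  rw [compHom_apply]; simp [ratComp]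

theorem nonconst_comp {f g : RatFunc k} (hf : RatFuncNonconst f) (hg : RatFuncNonconst g) :
    RatFuncNonconst (ratComp f g) := by
  rintro ⟨c, hc⟩
  rw [← compHom_apply g hg, ← compHom_C g hg c] at hc
  exact hf ⟨c, (compHom g hg).injective hc⟩

theorem ratComp_assoc (f g h : RatFunc k) (hh : RatFuncNonconst h) :
    ratComp (ratComp f g) h = ratComp f (ratComp g h) := by
  rw [← compHom_apply h hh, ratComp, map_div₀, ratComp]
  congr 1 <;> rw [← compHom_apply h hh, ← Polynomial.aeval_algHom_apply]

theorem ratComp_X (f : RatFunc k) : ratComp f RatFunc.X = f := by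
  simp [ratComp]

theorem X_ratComp (f : RatFunc k) : ratComp RatFunc.X f = f := by
  simp [ratComp]

theorem nonconst_X : RatFuncNonconst (RatFunc.X : RatFunc k) := by
  rintro ⟨c, hc⟩
  have := congrArg RatFunc.num hc
  simp only [RatFunc.num_X, RatFunc.num_C] at this
  exact X_ne_C c this

theorem ratDeriv_div (P Q : k[X]) (hQ : Q ≠ 0) :
    ratDeriv (algebraMap k[X] (RatFunc k) P / algebraMap k[X] (RatFunc k) Q) =
      algebraMap k[X] (RatFunc k) (derivative P * Q - P * derivative Q) /
        algebraMap k[X] (RatFunc k) (Q ^ 2) := by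
  set h := algebraMap k[X] (RatFunc k) P / algebraMap k[X] (RatFunc k) Q with hh
  have hQ' := RatFunc.algebraMap_ne_zero hQ
  have hd := h.denom_ne_zero
  have hd' := RatFunc.algebraMap_ne_zero hd
  have e : P * h.denom = h.num * Q := by
    apply RatFunc.algebraMap_injective k
    have := RatFunc.num_div_denom h
    rw [hh, div_eq_div_iff hd' hQ'] at this
    simp only [map_mul]
    exact this.symm
  have e' := congrArg derivative e
  simp only [derivative_mul] at e'
  unfold ratDeriv
  rw [div_eq_div_iff (RatFunc.algebraMap_ne_zero (pow_ne_zero 2 hd))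
    (RatFunc.algebraMap_ne_zero (pow_ne_zero 2 hQ)), ← map_mul, ← map_mul]
  congr 1
  linear_combination (-Q * h.denom) * e' + (derivative Q * h.denom + Q * derivative h.denom) * e

theorem ratDeriv_algebraMap (P : k[X]) :
    ratDeriv (algebraMap k[X] (RatFunc k) P) = algebraMap k[X] (RatFunc k) (derivative P) := by
  simp [ratDeriv]

/-- `ratDeriv` is a `k`-derivation of `k(t)`. -/
noncomputable def der : Derivation k (RatFunc k) (RatFunc k) :=
  Derivation.mk'
    { toFun := ratDeriv
      map_add' := by
        intro f g
        have hf := f.denom_ne_zero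
        have hg := g.denom_ne_zero
        have hf' := RatFunc.algebraMap_ne_zero hf
        have hg' := RatFunc.algebraMap_ne_zero hg
        have e : f + g = algebraMap k[X] (RatFunc k) (f.num * g.denom + f.denom * g.num) /
            algebraMap k[X] (RatFunc k) (f.denom * g.denom) := by
          conv_lhs => rw [← RatFunc.num_div_denom f, ← RatFunc.num_div_denom g]
          rw [div_add_div _ _ hf' hg']
          simp
        rw [e, ratDeriv_div _ _ (mul_ne_zero hf hg)]
        unfold ratDeriv
        simp only [map_mul, map_pow, map_sub, map_add, derivative_mul]
        field_simp
        ring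
      map_smul' := by
        intro c f
        have hf := f.denom_ne_zero
        have hf' := RatFunc.algebraMap_ne_zero hf
        have e : c • f = algebraMap k[X] (RatFunc k) (Polynomial.C c * f.num) /
            algebraMap k[X] (RatFunc k) f.denom := by
          conv_lhs => rw [← RatFunc.num_div_denom f]
          rw [Algebra.smul_def, map_mul, mul_div_assoc]
          simp
        rw [e, ratDeriv_div _ _ hf]
        unfold ratDeriv
        rw [Algebra.smul_def]
        simp [derivative_mul]
        ring }
    (by
      intro f g
      have hf := f.denom_ne_zero
      have hg := g.denom_ne_zero
      have hf' := RatFunc.algebraMap_ne_zero hf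
      have hg' := RatFunc.algebraMap_ne_zero hg
      have e : f * g = algebraMap k[X] (RatFunc k) (f.num * g.num) /
          algebraMap k[X] (RatFunc k) (f.denom * g.denom) := by
        conv_lhs => rw [← RatFunc.num_div_denom f, ← RatFunc.num_div_denom g]
        rw [div_mul_div_comm]
        simp
      change ratDeriv (f * g) = f * ratDeriv g + g * ratDeriv f
      rw [e, ratDeriv_div _ _ (mul_ne_zero hf hg)]
      conv_rhs =>
        enter [1, 1]
        rw [← RatFunc.num_div_denom f]
      conv_rhs =>
        enter [2, 1]
        rw [← RatFunc.num_div_denom g]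
      unfold ratDeriv
      simp only [map_mul, map_pow, map_sub, map_add, derivative_mul]
      field_simp
      ring)

theorem der_apply (f : RatFunc k) : der f = ratDeriv f := rfl

/-- The chain rule. -/
theorem ratDeriv_comp (f g : RatFunc k) (hg : RatFuncNonconst g) :
    ratDeriv (ratComp f g) = ratComp (ratDeriv f) g * ratDeriv g := by
  have hden : (aeval g f.denom : RatFunc k) ≠ 0 := by
    rw [← compHom_algebraMap g hg]
    exact (_root_.map_ne_zero _).2 (RatFunc.algebraMap_ne_zero f.denom_ne_zero)
  rw [← compHom_apply g hg (ratDeriv f)]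
  unfold ratDeriv ratComp
  rw [map_div₀, compHom_algebraMap, compHom_algebraMap]
  change der _ = _ * der g
  rw [Derivation.leibniz_div]
  simp only [Derivation.map_aeval, smul_eq_mul, map_sub, map_mul, map_pow]
  field_simp

/-! ### Local orders at finite points -/

/-- The rational function `h` is regular at `a`, with value `c` there. -/
def ValAt (a : k) (h : RatFunc k) (c : k) : Prop :=
  ∃ P Q : k[X], Q.eval a ≠ 0 ∧ P.eval a = c * Q.eval a ∧
    h = algebraMap k[X] (RatFunc k) P / algebraMap k[X] (RatFunc k) Q

/-- The rational function `h` has order exactly `n` at `a`: it is `(t - a)^n` times a function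
that is regular and nonzero at `a`. -/
def OrdAt (a : k) (h : RatFunc k) (n : ℤ) : Prop :=
  ∃ u c, c ≠ 0 ∧ ValAt a u c ∧ h = (RatFunc.X - RatFunc.C a) ^ n * u

theorem algebraMap_ne_zero_of_eval {a : k} {Q : k[X]} (h : Q.eval a ≠ 0) :
    algebraMap k[X] (RatFunc k) Q ≠ 0 :=
  RatFunc.algebraMap_ne_zero (by rintro rfl; simp at h)

theorem algebraMap_X_sub_C (a : k) :
    algebraMap k[X] (RatFunc k) (X - Polynomial.C a) = RatFunc.X - RatFunc.C a := by
  simp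

theorem X_sub_C_ne_zero' (a : k) : (RatFunc.X - RatFunc.C a : RatFunc k) ≠ 0 := by
  rw [← algebraMap_X_sub_C]
  exact RatFunc.algebraMap_ne_zero (X_sub_C_ne_zero a)

theorem ValAt.poly (a : k) (P : k[X]) : ValAt a (algebraMap k[X] (RatFunc k) P) (P.eval a) :=
  ⟨P, 1, by simp, by simp, by simp⟩

theorem ValAt.const (a c : k) : ValAt a (RatFunc.C c) c := by
  simpa using ValAt.poly a (Polynomial.C c)

theorem ValAt.X (a : k) : ValAt a RatFunc.X a := by
  simpa using ValAt.poly a Polynomial.X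

theorem ValAt.add {a c d : k} {g h : RatFunc k} (hg : ValAt a g c) (hh : ValAt a h d) :
    ValAt a (g + h) (c + d) := by
  obtain ⟨P, Q, hQ, e, rfl⟩ := hg
  obtain ⟨P', Q', hQ', e', rfl⟩ := hh
  refine ⟨P * Q' + Q * P', Q * Q', by simp [hQ, hQ'], ?_, ?_⟩
  · simp only [eval_add, eval_mul, e, e']; ring
  · rw [div_add_div _ _ (algebraMap_ne_zero_of_eval hQ) (algebraMap_ne_zero_of_eval hQ')]
    simp

theorem ValAt.mul {a c d : k} {g h : RatFunc k} (hg : ValAt a g c) (hh : ValAt a h d) :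
    ValAt a (g * h) (c * d) := by
  obtain ⟨P, Q, hQ, e, rfl⟩ := hg
  obtain ⟨P', Q', hQ', e', rfl⟩ := hh
  refine ⟨P * P', Q * Q', by simp [hQ, hQ'], ?_, ?_⟩
  · simp only [eval_mul, e, e']; ring
  · rw [div_mul_div_comm]
    simp

theorem ValAt.neg {a c : k} {g : RatFunc k} (hg : ValAt a g c) : ValAt a (-g) (-c) := by
  have := (ValAt.const a (-1)).mul hg
  simpa using this

theorem ValAt.sub {a c d : k} {g h : RatFunc k} (hg : ValAt a g c) (hh : ValAt a h d) :
    ValAt a (g - h) (c - d) := by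
  simpa [sub_eq_add_neg] using hg.add hh.neg

theorem ValAt.inv {a c : k} {g : RatFunc k} (hg : ValAt a g c) (hc : c ≠ 0) :
    ValAt a g⁻¹ c⁻¹ := by
  obtain ⟨P, Q, hQ, e, rfl⟩ := hg
  refine ⟨Q, P, by rw [e]; exact mul_ne_zero hc hQ, by rw [e]; field_simp, by rw [inv_div]⟩

theorem ValAt.pow {a c : k} {g : RatFunc k} (hg : ValAt a g c) (n : ℕ) :
    ValAt a (g ^ n) (c ^ n) := by
  induction n with
  | zero => simpa using ValAt.const a 1
  | succ n ih => simpa [pow_succ] using ih.mul hg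

theorem ValAt.zpow {a c : k} {g : RatFunc k} (hg : ValAt a g c) (hc : c ≠ 0) (n : ℤ) :
    ValAt a (g ^ n) (c ^ n) := by
  cases n with
  | ofNat n => simpa using hg.pow n
  | negSucc n =>
    simpa only [zpow_negSucc] using (hg.pow (n + 1)).inv (pow_ne_zero _ hc)

theorem ValAt.unique {a c d : k} {g : RatFunc k} (hg : ValAt a g c) (hh : ValAt a g d) :
    c = d := by
  obtain ⟨P, Q, hQ, e, rfl⟩ := hg
  obtain ⟨P', Q', hQ', e', h⟩ := hh
  rw [div_eq_div_iff (algebraMap_ne_zero_of_eval hQ) (algebraMap_ne_zero_of_eval hQ'),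
    ← map_mul, ← map_mul] at h
  have := congrArg (eval a) (RatFunc.algebraMap_injective k h)
  rw [eval_mul, eval_mul, e, e'] at this
  apply mul_right_cancel₀ (mul_ne_zero hQ hQ')
  linear_combination this

theorem ValAt.aeval {a b : k} {σ : RatFunc k} (hσ : ValAt a σ b) (P : k[X]) :
    ValAt a (aeval σ P) (P.eval b) := by
  induction P using Polynomial.induction_on' with
  | add p q hp hq => simpa using hp.add hq
  | monomial n c =>
    have := (ValAt.const a c).mul (hσ.pow n)
    simpa [aeval_monomial, eval_monomial] using this

theorem ValAt.comp {a b c : k} {σ f : RatFunc k} (hc : RatFuncNonconst σ)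
    (hσ : ValAt a σ b) (hf : ValAt b f c) : ValAt a (ratComp f σ) c := by
  obtain ⟨P, Q, hQ, e, rfl⟩ := hf
  rw [← compHom_apply σ hc, map_div₀, compHom_algebraMap, compHom_algebraMap, div_eq_mul_inv]
  have := (hσ.aeval P).mul ((hσ.aeval Q).inv hQ)
  rwa [e, mul_assoc, mul_inv_cancel₀ hQ, mul_one] at this

theorem OrdAt.of_val {a c : k} {h : RatFunc k} (hh : ValAt a h c) (hc : c ≠ 0) : OrdAt a h 0 :=
  ⟨h, c, hc, hh, by simp⟩

theorem OrdAt.mul {a : k} {g h : RatFunc k} {m n : ℤ} (hg : OrdAt a g m) (hh : OrdAt a h n) :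
    OrdAt a (g * h) (m + n) := by
  obtain ⟨u, c, hc, hu, rfl⟩ := hg
  obtain ⟨v, d, hd, hv, rfl⟩ := hh
  refine ⟨u * v, c * d, mul_ne_zero hc hd, hu.mul hv, ?_⟩
  rw [zpow_add₀ (X_sub_C_ne_zero' a)]; ring

theorem OrdAt.zpow {a : k} {g : RatFunc k} {m : ℤ} (hg : OrdAt a g m) (n : ℤ) :
    OrdAt a (g ^ n) (m * n) := by
  obtain ⟨u, c, hc, hu, rfl⟩ := hg
  exact ⟨u ^ n, c ^ n, zpow_ne_zero _ hc, hu.zpow hc n, by rw [mul_zpow, zpow_mul]⟩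

theorem not_ordAt_of_lt {a : k} {g : RatFunc k} {m n : ℤ} (hm : OrdAt a g m) (hn : OrdAt a g n)
    (hlt : m < n) : False := by
  obtain ⟨u, c, hc, hu, rfl⟩ := hm
  obtain ⟨v, d, hd, hv, h⟩ := hn
  have hX := X_sub_C_ne_zero' a
  have e : u = (RatFunc.X - RatFunc.C a) ^ (n - m).toNat * v := by
    have : n = m + ((n - m).toNat : ℤ) := by omega
    rw [this, zpow_add₀ hX, mul_assoc] at h
    rw [← zpow_natCast]
    exact mul_left_cancel₀ (zpow_ne_zero m hX) h
  have hv' := (((ValAt.X a).sub (ValAt.const a a)).pow (n - m).toNat).mul hv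
  rw [← e, sub_self, zero_pow (by omega), zero_mul] at hv'
  exact hc (hu.unique hv')

theorem OrdAt.unique {a : k} {g : RatFunc k} {m n : ℤ} (hm : OrdAt a g m) (hn : OrdAt a g n) :
    m = n := by
  rcases lt_trichotomy m n with h | h | h
  · exact (not_ordAt_of_lt hm hn h).elim
  · exact h
  · exact (not_ordAt_of_lt hn hm h).elim

theorem ordAt_poly (a : k) {P : k[X]} (hP : P ≠ 0) :
    OrdAt a (algebraMap k[X] (RatFunc k) P) (P.rootMultiplicity a) := by
  obtain ⟨q, hq, hnd⟩ := Polynomial.exists_eq_pow_rootMultiplicity_mul_and_not_dvd P hP a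
  refine ⟨algebraMap k[X] (RatFunc k) q, q.eval a, ?_, ValAt.poly a q, ?_⟩
  · rwa [dvd_iff_isRoot] at hnd
  · conv_lhs => rw [hq]
    rw [map_mul, map_pow, algebraMap_X_sub_C, zpow_natCast]

theorem ordAt_div (a : k) {P Q : k[X]} (hP : P ≠ 0) (hQ : Q ≠ 0) :
    OrdAt a (algebraMap k[X] (RatFunc k) P / algebraMap k[X] (RatFunc k) Q)
      ((P.rootMultiplicity a : ℤ) - Q.rootMultiplicity a) := by
  have := (ordAt_poly a hP).mul ((ordAt_poly a hQ).zpow (-1))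
  rwa [mul_neg_one, ← sub_eq_add_neg, zpow_neg_one, ← div_eq_mul_inv] at this

theorem ordAt_ratOrd (a : k) {h : RatFunc k} (hh : h ≠ 0) : OrdAt a h (ratOrd a h) := by
  have := ordAt_div a (RatFunc.num_ne_zero hh) h.denom_ne_zero
  rwa [RatFunc.num_div_denom] at this

/-- If `σ - b` vanishes to order `e > 0` at `a`, then `σ` takes the value `b` at `a`. -/
theorem OrdAt.val {a b : k} {σ : RatFunc k} {e : ℕ} (he : 0 < e)
    (h : OrdAt a (σ - RatFunc.C b) e) : ValAt a σ b := by
  obtain ⟨u, c, hc, hu, h⟩ := h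
  have := ((((ValAt.X a).sub (ValAt.const a a)).pow e).mul hu).add (ValAt.const a b)
  rw [sub_self, zero_pow he.ne', zero_mul, zero_add] at this
  rw [zpow_natCast] at h
  rwa [← h, sub_add_cancel] at this

/-- The converse: where `σ` takes the value `b`, the difference `σ - b` has a positive order. -/
theorem ValAt.exists_ordAt {a b : k} {σ : RatFunc k} (hσ : RatFuncNonconst σ)
    (h : ValAt a σ b) : ∃ e : ℕ, 0 < e ∧ OrdAt a (σ - RatFunc.C b) e := by
  have hne : σ - RatFunc.C b ≠ 0 := fun h0 => hσ ⟨b, sub_eq_zero.1 h0⟩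
  have ho := ordAt_ratOrd a hne
  set n := ratOrd a (σ - RatFunc.C b) with hn
  have hv := h.sub (ValAt.const a b)
  rw [sub_self] at hv
  rcases lt_or_ge 0 n with hpos | hneg
  · exact ⟨n.toNat, by omega, by rwa [Int.toNat_of_nonneg hpos.le]⟩
  · exfalso
    obtain ⟨u, c, hc, hu, e⟩ := ho
    have hX := X_sub_C_ne_zero' a
    have e2 : u = (RatFunc.X - RatFunc.C a) ^ (-n).toNat * (σ - RatFunc.C b) := by
      rw [e, ← mul_assoc, ← zpow_natCast, Int.toNat_of_nonneg (by omega), ← zpow_add₀ hX]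
      simp
    have := (((ValAt.X a).sub (ValAt.const a a)).pow (-n).toNat).mul hv
    rw [← e2, mul_zero] at this
    exact hc (hu.unique this)

theorem OrdAt.comp {a b : k} {σ f : RatFunc k} {e : ℕ} {m : ℤ} (hc : RatFuncNonconst σ)
    (he : 0 < e) (hσ : OrdAt a (σ - RatFunc.C b) e) (hf : OrdAt b f m) :
    OrdAt a (ratComp f σ) (e * m) := by
  have hv := hσ.val he
  obtain ⟨u, c, hc0, hu, rfl⟩ := hf
  rw [← compHom_apply σ hc, map_mul, map_zpow₀, map_sub, compHom_X, compHom_C]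
  have := (hσ.zpow m).mul (OrdAt.of_val (hv.comp hc hu) hc0)
  rwa [add_zero, ← compHom_apply σ hc] at this

/-- Tame ramification of index `e` makes the derivative vanish to order exactly `e - 1`. -/
theorem OrdAt.deriv {a b : k} {σ : RatFunc k} {e : ℕ} (he : (e : k) ≠ 0)
    (hσ : OrdAt a (σ - RatFunc.C b) e) : OrdAt a (ratDeriv σ) (e - 1) := by
  have he0 : e ≠ 0 := by rintro rfl; simp at he
  obtain ⟨u, c, hc, ⟨P, Q, hQ, hP, rfl⟩, h⟩ := hσ
  have hQ' := algebraMap_ne_zero_of_eval hQ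
  have hQ0 : Q ≠ 0 := by rintro rfl; simp at hQ
  have hs : σ = algebraMap k[X] (RatFunc k)
      ((X - Polynomial.C a) ^ e * P + Polynomial.C b * Q) / algebraMap k[X] (RatFunc k) Q := by
    rw [sub_eq_iff_eq_add.1 h, map_add, map_mul, map_pow, algebraMap_X_sub_C, map_mul,
      zpow_natCast]
    field_simp
    simp
  obtain ⟨n, rfl⟩ := Nat.exists_eq_succ_of_ne_zero he0
  refine ⟨algebraMap k[X] (RatFunc k) (((n + 1 : ℕ) : k[X]) * P * Q +
      (X - Polynomial.C a) * (derivative P * Q - P * derivative Q)) /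
      algebraMap k[X] (RatFunc k) (Q ^ 2), (n + 1 : ℕ) * c, mul_ne_zero he hc,
      ⟨_, Q ^ 2, by simp [hQ], ?_, rfl⟩, ?_⟩
  · simp [hP]; ring
  · rw [hs, ratDeriv_div _ _ hQ0]
    have : (((n.succ : ℕ) : ℤ) - 1) = (n : ℤ) := by push_cast; ring
    rw [this, zpow_natCast, ← mul_div_assoc, ← algebraMap_X_sub_C, ← map_pow, ← map_mul]
    congr 2
    simp only [derivative_add, derivative_mul, derivative_X_sub_C_pow, derivative_C]
    push_cast
    simp
    ring

/-! ### The exceptional set of the form -/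

/-- The transformation rule for `ord + 1` of a semi-invariant form along a tame map. -/
theorem ratOrd_rule {σ f : RatFunc k} (hnc : RatFuncNonconst σ)
    (htame : ∀ (a b : k) (e : ℕ), 0 < e → OrdAt a (σ - RatFunc.C b) e → (e : k) ≠ 0)
    (hf : f ≠ 0) (lam : kˣ)
    (hinv : ratComp f σ * ratDeriv σ = RatFunc.C (lam : k) * f)
    {a b : k} {e : ℕ} (he : 0 < e) (ho : OrdAt a (σ - RatFunc.C b) e) :
    ratOrd a f + 1 = e * (ratOrd b f + 1) := by
  have h1 := (ho.comp hnc he (ordAt_ratOrd b hf)).mul (ho.deriv (htame a b e he ho))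
  have h2 := (OrdAt.of_val (ValAt.const a (lam : k)) lam.ne_zero).mul (ordAt_ratOrd a hf)
  rw [hinv] at h1
  have := h1.unique h2
  linarith

theorem eq_C_mul_pow_of_unique_root [IsAlgClosed k] {P : k[X]} {a : k}
    (h : ∀ x, P.eval x = 0 → x = a) :
    P = Polynomial.C P.leadingCoeff * (X - Polynomial.C a) ^ P.natDegree := by
  by_cases hP : P = 0
  · simp [hP]
  have hs := IsAlgClosed.splits P
  have hr : P.roots = Multiset.replicate P.natDegree a := by
    rw [Multiset.eq_replicate]
    refine ⟨hs.natDegree_eq_card_roots.symm, fun x hx => h x ?_⟩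
    exact (Polynomial.mem_roots'.1 hx).2
  conv_lhs => rw [hs.eq_prod_roots, hr]
  simp

/-- If `f dt` has order zero at `∞` (`hdegf`) and `σ(∞)` is not a zero or pole of it (`hdeg`), then
the zeros and poles of the form are exactly two finite points, each totally ramified, permuted by
`σ`. The conclusion records the fibres of `σ = A / B` over these points. -/
theorem two_points [IsAlgClosed k] {σ f : RatFunc k} {A B : k[X]} {d : ℕ} (hd : 2 ≤ d)
    (hAB : ∀ a, ¬ (A.eval a = 0 ∧ B.eval a = 0))
    (hσ : σ = algebraMap k[X] (RatFunc k) A / algebraMap k[X] (RatFunc k) B)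
    (hnc : RatFuncNonconst σ)
    (htame : ∀ (a b : k) (e : ℕ), 0 < e → OrdAt a (σ - RatFunc.C b) e → (e : k) ≠ 0)
    (hf : f ≠ 0) (hdegf : f.intDegree = -2)
    (hdeg : ∀ s, ratOrd s f ≠ 0 → (A - Polynomial.C s * B).natDegree = d)
    (lam : kˣ) (hinv : ratComp f σ * ratDeriv σ = RatFunc.C (lam : k) * f) :
    ∃ s s' c c' : k, s ≠ s' ∧ c ≠ 0 ∧ c' ≠ 0 ∧
      ((A - Polynomial.C s * B = Polynomial.C c * (X - Polynomial.C s) ^ d ∧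
        A - Polynomial.C s' * B = Polynomial.C c' * (X - Polynomial.C s') ^ d) ∨
       (A - Polynomial.C s * B = Polynomial.C c * (X - Polynomial.C s') ^ d ∧
        A - Polynomial.C s' * B = Polynomial.C c' * (X - Polynomial.C s) ^ d)) := by
  classical
  have hnum := RatFunc.num_ne_zero hf
  have hden := f.denom_ne_zero
  have hB0 : B ≠ 0 := by
    rintro rfl
    exact hnc ⟨0, by simp [hσ]⟩
  have rule : ∀ {a b : k} {e : ℕ}, 0 < e → OrdAt a (σ - RatFunc.C b) e →
      ratOrd a f + 1 = e * (ratOrd b f + 1) :=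
    fun he ho => ratOrd_rule hnc htame hf lam hinv he ho
  let S : Set k := {s | ratOrd s f ≠ 0}
  have hSfin : S.Finite := by
    refine Set.Finite.subset (f.num * f.denom).roots.toFinset.finite_toSet ?_
    intro s hs
    simp only [Finset.mem_coe, Multiset.mem_toFinset, mem_roots (mul_ne_zero hnum hden)]
    by_contra hroot
    rw [IsRoot, eval_mul, mul_eq_zero, not_or] at hroot
    apply hs
    rw [ratOrd, rootMultiplicity_eq_zero hroot.1, rootMultiplicity_eq_zero hroot.2]
    simp
  -- A root of `A - s B` is a preimage of `s`, and lies in `S` along with `s`.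
  have hval : ∀ s a, (A - Polynomial.C s * B).eval a = 0 → ValAt a σ s := by
    intro s a h
    have h' : A.eval a = s * B.eval a := by simpa [sub_eq_zero] using h
    refine ⟨A, B, fun hb => hAB a ⟨by rw [h', hb, mul_zero], hb⟩, h', hσ⟩
  have hmem : ∀ s ∈ S, ∀ a, (A - Polynomial.C s * B).eval a = 0 → a ∈ S := by
    intro s hs a h ha
    obtain ⟨e, he, ho⟩ := (hval s a h).exists_ordAt hnc
    have hr := rule he ho
    rw [ha] at hr
    have he1 : (e : ℤ) = 1 := Int.eq_one_of_dvd_one (by omega) ⟨_, hr⟩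
    rw [he1] at hr
    exact hs (by linarith)
  have hex : ∀ s : S, ∃ a : S, (A - Polynomial.C s.1 * B).eval a.1 = 0 := by
    intro s
    obtain ⟨a, ha⟩ := IsAlgClosed.exists_root (A - Polynomial.C s.1 * B) (by
      intro h0
      have h1 : (A - Polynomial.C s.1 * B).natDegree = 0 := natDegree_eq_of_degree_eq_some h0
      rw [hdeg s s.2] at h1
      omega)
    exact ⟨⟨a, hmem s s.2 a ha⟩, ha⟩
  choose g hg using hex
  have hginj : Function.Injective g := by
    intro s t hst
    apply Subtype.ext
    have h1 := hval _ _ (hg s)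
    rw [hst] at h1
    exact h1.unique (hval _ _ (hg t))
  have : Finite S := hSfin
  have hgsurj : Function.Surjective g := Finite.surjective_of_injective hginj
  have hpoly : ∀ s : S, ∃ c : k, c ≠ 0 ∧
      A - Polynomial.C s.1 * B = Polynomial.C c * (X - Polynomial.C (g s).1) ^ d := by
    intro s
    have hds := hdeg s s.2
    refine ⟨(A - Polynomial.C s.1 * B).leadingCoeff, ?_, ?_⟩
    · rw [leadingCoeff_ne_zero]
      intro h0
      rw [h0, natDegree_zero] at hds
      omega
    · have := eq_C_mul_pow_of_unique_root (P := A - Polynomial.C s.1 * B) (a := (g s).1) (by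
        intro x hx
        obtain ⟨t, ht⟩ := hgsurj ⟨x, hmem s s.2 x hx⟩
        have h1 := hval _ _ (hg t)
        rw [ht] at h1
        have h2 : t = s := Subtype.ext (h1.unique (hval _ _ hx))
        rw [← h2, ht])
      rwa [hds] at this
  -- Total ramification over `S` multiplies `ord + 1` by `d` along a permutation of `S`.
  have hmul : ∀ s : S, ratOrd (g s).1 f + 1 = d * (ratOrd s.1 f + 1) := by
    intro s
    obtain ⟨c, hc, hP⟩ := hpoly s
    have hBg : B.eval (g s).1 ≠ 0 := by
      intro hb
      refine hAB (g s).1 ⟨?_, hb⟩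
      have := hg s
      simpa [hb] using this
    refine rule (by omega) ⟨algebraMap k[X] (RatFunc k) (Polynomial.C c) /
      algebraMap k[X] (RatFunc k) B, c / B.eval (g s).1, div_ne_zero hc hBg,
      ⟨_, B, hBg, by simp [hBg], rfl⟩, ?_⟩
    have hB' := RatFunc.algebraMap_ne_zero hB0
    have hP' := congrArg (algebraMap k[X] (RatFunc k)) hP
    simp only [map_sub, map_mul, map_pow, RatFunc.algebraMap_C, RatFunc.algebraMap_X] at hP'
    rw [hσ, zpow_natCast, RatFunc.algebraMap_C]
    field_simp
    linear_combination hP'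
  have hneg : ∀ s ∈ S, ratOrd s f = -1 := by
    intro s hs
    have : Nonempty S := ⟨⟨s, hs⟩⟩
    obtain ⟨t, ht⟩ := Finite.exists_max (fun s : S => |ratOrd s.1 f + 1|)
    have h1 := ht (g t)
    have h2 := ht ⟨s, hs⟩
    simp only at h1 h2
    rw [hmul t, abs_mul, Nat.abs_cast] at h1
    have h3 : (2 : ℤ) ≤ d := by exact_mod_cast hd
    have h4 : |ratOrd t.1 f + 1| = 0 := by nlinarith [abs_nonneg (ratOrd t.1 f + 1)]
    rw [h4] at h2
    have h5 := abs_nonpos_iff.1 h2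
    linarith
  have hcop : ∀ s, ¬ (f.num.eval s = 0 ∧ f.denom.eval s = 0) := by
    rintro s ⟨h1, h2⟩
    obtain ⟨u, v, huv⟩ := f.isCoprime_num_denom
    have := congrArg (eval s) huv
    simp [h1, h2] at this
  have hnum0 : f.num.natDegree = 0 := by
    by_contra h0
    obtain ⟨s, hs⟩ := IsAlgClosed.exists_root f.num (by
      intro h; exact h0 (natDegree_eq_of_degree_eq_some h))
    have h1 : 0 < f.num.rootMultiplicity s := (rootMultiplicity_pos hnum).2 hs
    have h2 : f.denom.rootMultiplicity s = 0 :=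
      rootMultiplicity_eq_zero fun h => hcop s ⟨hs, h⟩
    have h3 : ratOrd s f = f.num.rootMultiplicity s := by simp [ratOrd, h2]
    have h4 := hneg s (by change ratOrd s f ≠ 0; omega)
    omega
  have hden2 : f.denom.natDegree = 2 := by
    rw [RatFunc.intDegree] at hdegf
    omega
  have hordden : ∀ s, ratOrd s f = -(f.denom.roots.count s : ℤ) := by
    intro s
    have : f.num.rootMultiplicity s = 0 := by
      rw [eq_C_of_natDegree_eq_zero hnum0, rootMultiplicity_C]
    rw [ratOrd, this, count_roots]
    simp
  have hcard : Multiset.card f.denom.roots = 2 := by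
    rw [← hden2, (IsAlgClosed.splits f.denom).natDegree_eq_card_roots]
  obtain ⟨s, s', hss⟩ := Multiset.card_eq_two.1 hcard
  have hmemS : ∀ t, t ∈ S ↔ t = s ∨ t = s' := by
    intro t
    change ratOrd t f ≠ 0 ↔ _
    rw [hordden, hss]
    have : t ∈ ({s, s'} : Multiset k) ↔ t = s ∨ t = s' := by simp
    rw [← this, ← Multiset.count_ne_zero]
    simp
  have hsS : s ∈ S := (hmemS s).2 (Or.inl rfl)
  have hsS' : s' ∈ S := (hmemS s').2 (Or.inr rfl)
  have hne : s ≠ s' := by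
    rintro rfl
    have := hneg s hsS
    rw [hordden, hss] at this
    simp at this
  obtain ⟨c, hc, hP⟩ := hpoly ⟨s, hsS⟩
  obtain ⟨c', hc', hP'⟩ := hpoly ⟨s', hsS'⟩
  have hgne : (g ⟨s, hsS⟩).1 ≠ (g ⟨s', hsS'⟩).1 := by
    intro h
    exact hne (congrArg Subtype.val (hginj (Subtype.ext h)))
  refine ⟨s, s', c, c', hne, hc, hc', ?_⟩
  rcases (hmemS _).1 (g ⟨s, hsS⟩).2 with h | h <;>
    rcases (hmemS _).1 (g ⟨s', hsS'⟩).2 with h' | h'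
  · exact absurd (h.trans h'.symm) hgne
  · rw [h] at hP; rw [h'] at hP'
    exact Or.inl ⟨hP, hP'⟩
  · rw [h] at hP; rw [h'] at hP'
    exact Or.inr ⟨hP, hP'⟩
  · exact absurd (h.trans h'.symm) hgne

/-! ### Möbius transformations -/

/-- The fractional linear function `(a t + b) / (c t + d)`. -/
noncomputable def mob (a b c d : k) : RatFunc k :=
  (RatFunc.C a * RatFunc.X + RatFunc.C b) / (RatFunc.C c * RatFunc.X + RatFunc.C d)

theorem linear_ne_zero {c d : k} (h : c ≠ 0 ∨ d ≠ 0) :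
    (RatFunc.C c * RatFunc.X + RatFunc.C d : RatFunc k) ≠ 0 := by
  have e : (RatFunc.C c * RatFunc.X + RatFunc.C d : RatFunc k) =
      algebraMap k[X] (RatFunc k) (Polynomial.C c * X + Polynomial.C d) := by simp
  rw [e]
  apply RatFunc.algebraMap_ne_zero
  intro h0
  have h1 := congrArg (coeff · 1) h0
  have h2 := congrArg (coeff · 0) h0
  simp [coeff_C] at h1 h2
  rcases h with h | h
  · exact h h1
  · exact h h2

theorem mob_nonconst {a b c d : k} (h : a * d - b * c ≠ 0) : RatFuncNonconst (mob a b c d) := by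
  rintro ⟨e, he⟩
  have hcd : c ≠ 0 ∨ d ≠ 0 := by
    by_contra! h0
    simp [h0.1, h0.2] at h
  rw [mob, div_eq_iff (linear_ne_zero hcd)] at he
  have h1 : (RatFunc.C (a - e * c) * RatFunc.X + RatFunc.C (b - e * d) : RatFunc k) = 0 := by
    simp only [map_sub, map_mul]
    linear_combination he
  by_cases h2 : a - e * c ≠ 0 ∨ b - e * d ≠ 0
  · exact linear_ne_zero h2 h1
  · push Not at h2
    apply h
    linear_combination d * h2.1 - c * h2.2

theorem mob_comp (a b c d : k) {g : RatFunc k} (hg : RatFuncNonconst g) :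
    ratComp (mob a b c d) g =
      (RatFunc.C a * g + RatFunc.C b) / (RatFunc.C c * g + RatFunc.C d) := by
  rw [← compHom_apply g hg, mob]
  simp only [map_div₀, map_add, map_mul, compHom_C, compHom_X]

theorem mob_inv {a b c d : k} (h : a * d - b * c ≠ 0) :
    ratComp (mob a b c d) (mob d (-b) (-c) a) = RatFunc.X := by
  have h' : d * a - (-b) * (-c) ≠ 0 := by
    rw [neg_mul_neg, mul_comm d a]; exact h
  rw [mob_comp _ _ _ _ (mob_nonconst h')]
  have hca : (-c) ≠ 0 ∨ a ≠ 0 := by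
    by_contra! h0
    simp only [neg_eq_zero] at h0
    simp [h0.1, h0.2] at h
  have hn := linear_ne_zero hca
  have hdet : (RatFunc.C (a * d - b * c) : RatFunc k) ≠ 0 := (_root_.map_ne_zero _).2 h
  rw [mob]
  set D : RatFunc k := RatFunc.C (-c) * RatFunc.X + RatFunc.C a with hD
  have e1 : RatFunc.C a * ((RatFunc.C d * RatFunc.X + RatFunc.C (-b)) / D) + RatFunc.C b =
      RatFunc.C (a * d - b * c) * RatFunc.X / D := by
    field_simp
    rw [hD]
    simp only [map_sub, map_mul, map_neg]
    ring
  have e2 : RatFunc.C c * ((RatFunc.C d * RatFunc.X + RatFunc.C (-b)) / D) + RatFunc.C d =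
      RatFunc.C (a * d - b * c) / D := by
    field_simp
    rw [hD]
    simp only [map_sub, map_mul, map_neg]
    ring
  rw [e1, e2]
  field_simp

theorem mob_inv' {a b c d : k} (h : a * d - b * c ≠ 0) :
    ratComp (mob d (-b) (-c) a) (mob a b c d) = RatFunc.X := by
  have hdet : d * a - (-b) * (-c) ≠ 0 := by
    rw [neg_mul_neg, mul_comm d a]; exact h
  simpa using mob_inv hdet

/-- A map with two totally ramified points which it permutes is conjugate to a power map. -/
theorem conj_power_of_two_points [IsAlgClosed k] {σ : RatFunc k} {A B : k[X]} {d : ℕ}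
    (hd : 2 ≤ d)
    (hσ : σ = algebraMap k[X] (RatFunc k) A / algebraMap k[X] (RatFunc k) B)
    (hnc : RatFuncNonconst σ) {s s' c c' : k} (hs : s ≠ s') (hc : c ≠ 0) (hc' : c' ≠ 0)
    (h : (A - Polynomial.C s * B = Polynomial.C c * (X - Polynomial.C s) ^ d ∧
        A - Polynomial.C s' * B = Polynomial.C c' * (X - Polynomial.C s') ^ d) ∨
       (A - Polynomial.C s * B = Polynomial.C c * (X - Polynomial.C s') ^ d ∧
        A - Polynomial.C s' * B = Polynomial.C c' * (X - Polynomial.C s) ^ d)) :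
    ∃ φ ψ : RatFunc k, RatFuncNonconst φ ∧ RatFuncNonconst ψ ∧
      ratComp φ ψ = RatFunc.X ∧ ratComp ψ φ = RatFunc.X ∧
      (ratComp (ratComp ψ σ) φ = RatFunc.X ^ (d : ℤ) ∨
        ratComp (ratComp ψ σ) φ = RatFunc.X ^ (-(d : ℤ))) := by
  have hB0 : B ≠ 0 := by
    rintro rfl
    exact hnc ⟨0, by simp [hσ]⟩
  have hB' := RatFunc.algebraMap_ne_zero hB0
  have hX := X_sub_C_ne_zero' s
  have hX' := X_sub_C_ne_zero' s'
  have hC' := (_root_.map_ne_zero (RatFunc.C (K := k))).2 hc'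
  have hC := (_root_.map_ne_zero (RatFunc.C (K := k))).2 hc
  -- The conjugating map `μ (t - s) / (t - s')`, with the scale `μ` still free.
  have key : ∀ μ : k, μ ≠ 0 → ∃ φ : RatFunc k, RatFuncNonconst φ ∧
      RatFuncNonconst (mob μ (-(μ * s)) 1 (-s')) ∧
      ratComp φ (mob μ (-(μ * s)) 1 (-s')) = RatFunc.X ∧
      ratComp (mob μ (-(μ * s)) 1 (-s')) φ = RatFunc.X := by
    intro μ hμ
    have hdet : μ * (-s') - (-(μ * s)) * 1 ≠ 0 := by
      have : μ * (-s') - (-(μ * s)) * 1 = μ * (s - s') := by ring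
      rw [this]
      exact mul_ne_zero hμ (sub_ne_zero.2 hs)
    have hdet' : (-s') * μ - (- -(μ * s)) * (-1) ≠ 0 := by
      intro h0; apply hdet; linear_combination h0
    exact ⟨_, mob_nonconst hdet', mob_nonconst hdet, mob_inv' hdet, mob_inv hdet⟩
  have hmob : ∀ μ : k, mob μ (-(μ * s)) 1 (-s') =
      RatFunc.C μ * (RatFunc.X - RatFunc.C s) / (RatFunc.X - RatFunc.C s') := by
    intro μ
    rw [mob]
    simp only [map_neg, map_mul, map_one]
    congr 1 <;> ring
  have hcomp : ∀ μ : k, ratComp (mob μ (-(μ * s)) 1 (-s')) σ =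
      RatFunc.C μ * algebraMap k[X] (RatFunc k) (A - Polynomial.C s * B) /
        algebraMap k[X] (RatFunc k) (A - Polynomial.C s' * B) := by
    intro μ
    rw [mob_comp _ _ _ _ hnc, hσ]
    simp only [map_neg, map_mul, map_one, map_sub, RatFunc.algebraMap_C]
    rw [← mul_div_mul_right _ (_ + _) hB']
    congr 1 <;> field_simp <;> ring
  have hpow : ∀ (z : ℤ) (φ ψ : RatFunc k), RatFuncNonconst φ → ratComp ψ φ = RatFunc.X →
      ratComp ψ σ = ψ ^ z → ratComp (ratComp ψ σ) φ = RatFunc.X ^ z := by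
    intro z φ ψ hφ h1 h2
    rw [h2, ← compHom_apply φ hφ, map_zpow₀, compHom_apply, h1]
  rcases h with ⟨h1, h2⟩ | ⟨h1, h2⟩
  · obtain ⟨μ, hμ⟩ := IsAlgClosed.exists_pow_nat_eq (c / c') (n := d - 1) (by omega)
    have hμ0 : μ ≠ 0 := by
      rintro rfl
      rw [zero_pow (by omega)] at hμ
      exact div_ne_zero hc hc' hμ.symm
    obtain ⟨φ, hφ, hψ, i1, i2⟩ := key μ hμ0
    refine ⟨φ, _, hφ, hψ, i1, i2, Or.inl (hpow d φ _ hφ i2 ?_)⟩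
    rw [hcomp, hmob, h1, h2, zpow_natCast]
    have e : RatFunc.C μ ^ d * RatFunc.C c' = RatFunc.C μ * RatFunc.C c := by
      rw [← map_pow, ← map_mul, ← map_mul]
      congr 1
      rw [eq_div_iff hc'] at hμ
      obtain ⟨n, rfl⟩ : ∃ n, d = n + 1 := ⟨d - 1, by omega⟩
      rw [Nat.add_sub_cancel] at hμ
      rw [pow_succ']
      linear_combination μ * hμ
    simp only [map_mul, map_pow, algebraMap_X_sub_C, RatFunc.algebraMap_C]
    rw [div_pow, mul_pow, div_eq_div_iff (mul_ne_zero hC' (pow_ne_zero _ hX'))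
      (pow_ne_zero _ hX')]
    linear_combination (-(RatFunc.X - RatFunc.C s) ^ d * (RatFunc.X - RatFunc.C s') ^ d) * e
  · obtain ⟨μ, hμ⟩ := IsAlgClosed.exists_pow_nat_eq (c' / c) (n := d + 1) (by omega)
    have hμ0 : μ ≠ 0 := by
      rintro rfl
      rw [zero_pow (by omega)] at hμ
      exact div_ne_zero hc' hc hμ.symm
    have hμ' := (_root_.map_ne_zero (RatFunc.C (K := k))).2 hμ0
    obtain ⟨φ, hφ, hψ, i1, i2⟩ := key μ hμ0
    refine ⟨φ, _, hφ, hψ, i1, i2, Or.inr (hpow _ φ _ hφ i2 ?_)⟩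
    rw [hcomp, hmob, h1, h2, zpow_neg, zpow_natCast]
    have e : RatFunc.C μ * RatFunc.C μ ^ d * RatFunc.C c = RatFunc.C c' := by
      rw [← map_pow, ← map_mul, ← map_mul]
      congr 1
      rw [eq_div_iff hc] at hμ
      rw [← pow_succ']
      exact hμ
    simp only [map_mul, map_pow, algebraMap_X_sub_C, RatFunc.algebraMap_C]
    rw [div_pow, mul_pow, inv_div, div_eq_div_iff (mul_ne_zero hC' (pow_ne_zero _ hX))
      (mul_ne_zero (pow_ne_zero _ hμ') (pow_ne_zero _ hX))]
    linear_combination ((RatFunc.X - RatFunc.C s) ^ d * (RatFunc.X - RatFunc.C s') ^ d) * e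

/-! ### Moving a generic point to infinity -/

/-- The polynomial `t^N P(c + 1/t)`, for `deg P ≤ N`. -/
noncomputable def rev (c : k) (N : ℕ) (P : k[X]) : k[X] := reflect N (taylor c P)

theorem coeff_rev_top (c : k) (N : ℕ) (P : k[X]) : (rev c N P).coeff N = P.eval c := by
  rw [rev, coeff_reflect, revAt_le le_rfl, Nat.sub_self, taylor_coeff_zero]

theorem eval_zero_rev (c : k) {N : ℕ} {P : k[X]} (hP : P.natDegree ≤ N) :
    (rev c N P).eval 0 = P.coeff N := by
  rw [← coeff_zero_eq_eval_zero, rev, coeff_reflect, revAt_le (Nat.zero_le _), Nat.sub_zero]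
  rcases hP.eq_or_lt with h | h
  · rw [← h, coeff_taylor_natDegree, leadingCoeff]
  · rw [coeff_eq_zero_of_natDegree_lt h, coeff_eq_zero_of_natDegree_lt (by rwa [natDegree_taylor])]

theorem natDegree_rev_le (c : k) {N : ℕ} {P : k[X]} (hP : P.natDegree ≤ N) :
    (rev c N P).natDegree ≤ N := by
  refine natDegree_reflect_le.trans ?_
  rw [natDegree_taylor, max_eq_left hP]

theorem natDegree_rev (c : k) {N : ℕ} {P : k[X]} (hP : P.natDegree ≤ N) (hc : P.eval c ≠ 0) :
    (rev c N P).natDegree = N :=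
  (natDegree_rev_le c hP).antisymm (le_natDegree_of_ne_zero (by rwa [coeff_rev_top]))

theorem aeval_rev {L : Type*} [Field L] [Algebra k L] (c : k) {N : ℕ} {P : k[X]}
    (hP : P.natDegree ≤ N) {x : L} (hx : x ≠ 0) :
    aeval x (rev c N P) = x ^ N * aeval (algebraMap k L c + x⁻¹) P := by
  let : Invertible (x⁻¹) := invertibleOfNonzero (inv_ne_zero hx)
  have h := eval₂_reflect_mul_pow (algebraMap k L) (x⁻¹) N (taylor c P) (by rwa [natDegree_taylor])
  rw [invOf_eq_inv, inv_inv, ← aeval_def, ← aeval_def, taylor_apply, aeval_comp] at h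
  simp only [map_add, aeval_X, aeval_C] at h
  rw [add_comm (algebraMap k L c), ← h, rev, taylor_apply, inv_pow]
  field_simp

theorem mob_eq (c : k) : mob c 1 1 0 = RatFunc.C c + (RatFunc.X : RatFunc k)⁻¹ := by
  have := RatFunc.X_ne_zero (K := k)
  rw [mob]
  simp only [map_one, map_zero, one_mul, add_zero]
  field_simp

theorem aeval_mob (c : k) {N : ℕ} {P : k[X]} (hP : P.natDegree ≤ N) :
    aeval (mob c 1 1 0) P =
      algebraMap k[X] (RatFunc k) (rev c N P) / (RatFunc.X : RatFunc k) ^ N := by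
  have hX := RatFunc.X_ne_zero (K := k)
  have h := aeval_rev c hP hX
  rw [RatFunc.aeval_X_left_eq_algebraMap, RatFunc.algebraMap_eq_C, ← mob_eq] at h
  rw [h, mul_div_cancel_left₀ _ (pow_ne_zero _ hX)]

theorem ratComp_mob (c : k) (f : RatFunc k) {N : ℕ} (h1 : f.num.natDegree ≤ N)
    (h2 : f.denom.natDegree ≤ N) :
    ratComp f (mob c 1 1 0) = algebraMap k[X] (RatFunc k) (rev c N f.num) /
      algebraMap k[X] (RatFunc k) (rev c N f.denom) := by
  have hX := RatFunc.X_ne_zero (K := k)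
  rw [ratComp, aeval_mob c h1, aeval_mob c h2, div_div_div_cancel_right₀ (pow_ne_zero _ hX)]

theorem ratDeriv_mob (c : k) :
    ratDeriv (mob c 1 1 0) = -((RatFunc.X : RatFunc k) ^ 2)⁻¹ := by
  have e : mob c 1 1 0 = algebraMap k[X] (RatFunc k) (Polynomial.C c * X + 1) /
      algebraMap k[X] (RatFunc k) X := by
    rw [mob]; simp
  rw [e, ratDeriv_div _ _ X_ne_zero]
  simp
  ring

/-- Semi-invariance is preserved by conjugation, with the form pulled back along `φ`. -/
theorem semiinv_conj {σ f φ ψ : RatFunc k} (hσ : RatFuncNonconst σ) (hφ : RatFuncNonconst φ)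
    (hψ : RatFuncNonconst ψ) (h : ratComp φ ψ = RatFunc.X) {l : k}
    (hinv : ratComp f σ * ratDeriv σ = RatFunc.C l * f) :
    ratComp (ratComp f φ * ratDeriv φ) (ratComp (ratComp ψ σ) φ) *
      ratDeriv (ratComp (ratComp ψ σ) φ) =
        RatFunc.C l * (ratComp f φ * ratDeriv φ) := by
  have hσφ := nonconst_comp hσ hφ
  have hs := nonconst_comp (nonconst_comp hψ hσ) hφ
  have e1 : ratComp φ (ratComp (ratComp ψ σ) φ) = ratComp σ φ := by
    rw [ratComp_assoc _ _ _ hφ, ← ratComp_assoc _ _ _ hσφ, h, X_ratComp]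
  rw [← compHom_apply _ hs, map_mul, compHom_apply, compHom_apply, mul_assoc,
    ← ratDeriv_comp _ _ hs, ratComp_assoc _ _ _ hs, e1, ratDeriv_comp _ _ hφ,
    ← ratComp_assoc _ _ _ hφ]
  have := congrArg (compHom φ hφ) hinv
  rw [map_mul, map_mul, compHom_C, compHom_apply, compHom_apply, compHom_apply] at this
  linear_combination ratDeriv φ * this

/-- Tameness in terms of local orders: ramification indices are nonzero in `k`. -/
theorem tame_cast_ne_zero {p : ℕ} [CharP k p] {σ φ ψ : RatFunc k} (htame : TamelyRamified p σ)
    (h1 : ratComp φ ψ = RatFunc.X) (h2 : ratComp ψ φ = RatFunc.X) (a b : k) (e : ℕ)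
    (he : 0 < e) (ho : OrdAt a (ratComp (ratComp ψ σ) φ - RatFunc.C b) e) : (e : k) ≠ 0 := by
  intro h0
  rw [CharP.cast_eq_zero_iff k p] at h0
  rcases htame with rfl | ⟨-, ht⟩
  · rw [zero_dvd_iff] at h0; omega
  set τ := ratComp (ratComp ψ σ) φ with hτ
  have hv := ho.val he
  have hden : τ.denom.eval a ≠ 0 := by
    obtain ⟨P, Q, hQ, -, hPQ⟩ := hv
    have hdvd := RatFunc.denom_div_dvd P Q
    rw [← hPQ] at hdvd
    intro hz
    exact hQ (eval_eq_zero_of_dvd_of_eval_eq_zero hdvd hz)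
  have heval : RatFunc.eval (RingHom.id k) a τ = b := by
    refine ValAt.unique (a := a) (g := τ) ⟨τ.num, τ.denom, hden, ?_, ?_⟩ hv
    · rw [RatFunc.eval]
      change _ = (τ.num.eval a / τ.denom.eval a) * _
      field_simp
    · rw [RatFunc.num_div_denom]
  have hne : τ - RatFunc.C b ≠ 0 := by
    intro h
    obtain ⟨u, c, hc, hu, h'⟩ := ho
    rw [h, eq_comm, mul_eq_zero] at h'
    rcases h' with h' | h'
    · exact zpow_ne_zero _ (X_sub_C_ne_zero' a) h'
    · rw [h'] at hu
      have := hu.unique (by simpa using ValAt.const a 0)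
      exact hc this
  have := ht φ ψ h1 h2 a hden
  rw [heval, (ordAt_ratOrd a hne).unique ho] at this
  exact this (by exact_mod_cast h0)

theorem exists_eval_ne_zero [Infinite k] {P : k[X]} (hP : P ≠ 0) : ∃ c, P.eval c ≠ 0 := by
  by_contra! h
  exact hP (Polynomial.funext (by simpa using h))

theorem nonconst_of_degree {σ : RatFunc k} (h : 2 ≤ ratDegree σ) : RatFuncNonconst σ := by
  rintro ⟨c, rfl⟩
  simp [ratDegree] at h

/-- Reduction to `two_points` and `conj_power_of_two_points`: a generic point `c` is moved to `∞` by
`1 / (t - c)`, so that the form has order zero at `∞` and at its image. -/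
theorem conj_power [IsAlgClosed k] (p : ℕ) [CharP k p]
    (σ : RatFunc k) (d : ℕ) (hd : 2 ≤ d) (hdeg : ratDegree σ = d)
    (htame : TamelyRamified p σ) (f : RatFunc k) (hf : f ≠ 0) (lam : kˣ)
    (hinv : ratComp f σ * ratDeriv σ = RatFunc.C (lam : k) * f) :
    ∃ φ ψ : RatFunc k, ratComp φ ψ = RatFunc.X ∧ ratComp ψ φ = RatFunc.X ∧
      (ratComp (ratComp ψ σ) φ = RatFunc.X ^ (d : ℤ) ∨
        ratComp (ratComp ψ σ) φ = RatFunc.X ^ (-(d : ℤ))) := by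
  have hnc : RatFuncNonconst σ := nonconst_of_degree (hdeg ▸ hd)
  have hfs : ratComp f σ ≠ 0 := by
    rw [← compHom_apply σ hnc]; exact (_root_.map_ne_zero _).2 hf
  set A := σ.num with hA
  set B := σ.denom with hB
  have hAd : A.natDegree ≤ d := hdeg ▸ le_max_left _ _
  have hBd : B.natDegree ≤ d := hdeg ▸ le_max_right _ _
  have hσAB : σ = algebraMap k[X] (RatFunc k) A / algebraMap k[X] (RatFunc k) B :=
    (RatFunc.num_div_denom σ).symm
  obtain ⟨c, hcP⟩ := exists_eval_ne_zero (P := B * (f.num * f.denom) *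
    ((ratComp f σ).num * (ratComp f σ).denom))
    (mul_ne_zero (mul_ne_zero σ.denom_ne_zero (mul_ne_zero (RatFunc.num_ne_zero hf)
      f.denom_ne_zero)) (mul_ne_zero (RatFunc.num_ne_zero hfs) (RatFunc.denom_ne_zero _)))
  simp only [eval_mul, mul_ne_zero_iff] at hcP
  obtain ⟨⟨hcB, hcF, hcG⟩, hcF', hcG'⟩ := hcP
  -- The form has order zero at `b = σ(c)`.
  set b := A.eval c / B.eval c with hb
  have hvb : ValAt c σ b := ⟨A, B, hcB, by rw [hb]; field_simp, hσAB⟩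
  have hob : ratOrd b f = 0 := by
    obtain ⟨e, he, ho⟩ := hvb.exists_ordAt hnc
    have h1 := ho.comp hnc he (ordAt_ratOrd b hf)
    have h2 := ordAt_ratOrd c hfs
    have h3 := h1.unique h2
    have h4 : ratOrd c (ratComp f σ) = 0 := by
      rw [ratOrd, rootMultiplicity_eq_zero hcF', rootMultiplicity_eq_zero hcG']
      simp
    rw [h4, mul_eq_zero, Nat.cast_eq_zero] at h3
    exact h3.resolve_left he.ne'
  have hdet : c * 0 - 1 * 1 ≠ (0 : k) := by simp
  have hdet' : 0 * c - (-1) * (-1) ≠ (0 : k) := by simp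
  set φ : RatFunc k := mob c 1 1 0 with hφdef
  set ψ : RatFunc k := mob 0 (-1) (-1) c with hψdef
  have hφ : RatFuncNonconst φ := mob_nonconst hdet
  have hψ : RatFuncNonconst ψ := mob_nonconst hdet'
  have h1 : ratComp φ ψ = RatFunc.X := mob_inv hdet
  have h2 : ratComp ψ φ = RatFunc.X := mob_inv' hdet
  set τ := ratComp (ratComp ψ σ) φ with hτ
  have hτnc : RatFuncNonconst τ := nonconst_comp (nonconst_comp hψ hnc) hφ
  have hXne := RatFunc.X_ne_zero (K := k)
  have hBrev : algebraMap k[X] (RatFunc k) (rev c d B) ≠ 0 := by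
    apply RatFunc.algebraMap_ne_zero
    intro h0
    have := coeff_rev_top c d B
    rw [h0, coeff_zero] at this
    exact hcB this.symm
  have hτeq : τ = algebraMap k[X] (RatFunc k) (rev c d B) /
      algebraMap k[X] (RatFunc k) (rev c d A - Polynomial.C c * rev c d B) := by
    rw [hτ, ratComp_assoc _ _ _ hφ, hψdef, mob_comp _ _ _ _ (nonconst_comp hnc hφ),
      ratComp_mob c σ hAd hBd, ← hA, ← hB]
    simp only [map_zero, zero_mul, zero_add, map_neg, map_one, map_sub, map_mul,
      RatFunc.algebraMap_C]
    rw [← mul_div_mul_right _ (_ + _) hBrev, ← neg_div_neg_eq]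
    congr 1
    · ring
    · field_simp
      ring
  set g := ratComp f φ * ratDeriv φ with hg
  have hderφ : ratDeriv φ = -((RatFunc.X : RatFunc k) ^ 2)⁻¹ := ratDeriv_mob c
  have hderne : ratDeriv φ ≠ 0 := by
    rw [hderφ]; exact neg_ne_zero.2 (inv_ne_zero (pow_ne_zero _ hXne))
  have hfφ : ratComp f φ ≠ 0 := by
    rw [← compHom_apply φ hφ]; exact (_root_.map_ne_zero _).2 hf
  have hgne : g ≠ 0 := mul_ne_zero hfφ hderne
  have hgdeg : g.intDegree = -2 := by
    have e1 : (ratComp f φ).intDegree = 0 := by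
      have hN1 := le_max_left f.num.natDegree f.denom.natDegree
      have hN2 := le_max_right f.num.natDegree f.denom.natDegree
      have hr := ratComp_mob c f hN1 hN2
      rw [← hφdef] at hr
      have hne := hfφ
      rw [hr, div_ne_zero_iff] at hne
      rw [hr, RatFunc.intDegree_div hne.1 hne.2, RatFunc.intDegree_polynomial,
        RatFunc.intDegree_polynomial, natDegree_rev c hN1 hcF, natDegree_rev c hN2 hcG, sub_self]
    rw [hg, RatFunc.intDegree_mul hfφ hderne, e1, hderφ, RatFunc.intDegree_neg,
      RatFunc.intDegree_inv, pow_two, RatFunc.intDegree_mul hXne hXne, RatFunc.intDegree_X]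
    norm_num
  have hinv' := semiinv_conj hnc hφ hψ h1 hinv
  obtain ⟨s, s', c₁, c₂, hs, hc₁, hc₂, hpts⟩ := two_points (σ := τ) (f := g) (A := rev c d B)
    (B := rev c d A - Polynomial.C c * rev c d B) hd (by
      rintro r ⟨hr1, hr2⟩
      have hr3 : (rev c d A).eval r = 0 := by simpa [hr1] using hr2
      by_cases hr : r = 0
      · subst hr
        rw [eval_zero_rev c hBd] at hr1
        rw [eval_zero_rev c hAd] at hr3
        have hmax : max A.natDegree B.natDegree = d := hdeg
        rcases max_choice A.natDegree B.natDegree with h | h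
        · have heq := h.symm.trans hmax
          rw [← heq, coeff_natDegree, leadingCoeff_eq_zero] at hr3
          rw [hr3, natDegree_zero] at heq
          omega
        · have heq := h.symm.trans hmax
          rw [← heq, coeff_natDegree, leadingCoeff_eq_zero] at hr1
          exact σ.denom_ne_zero hr1
      · have hA' := aeval_rev c hAd hr
        have hB' := aeval_rev c hBd hr
        simp only [coe_aeval_eq_eval, Algebra.algebraMap_self, RingHom.id_apply] at hA' hB'
        rw [hr3, eq_comm, mul_eq_zero] at hA'
        rw [hr1, eq_comm, mul_eq_zero] at hB'
        have hA'' := hA'.resolve_left (pow_ne_zero _ hr)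
        have hB'' := hB'.resolve_left (pow_ne_zero _ hr)
        obtain ⟨u, v, huv⟩ := σ.isCoprime_num_denom
        have := congrArg (eval (c + r⁻¹)) huv
        rw [← hA, ← hB] at this
        simp [hA'', hB''] at this)
    hτeq hτnc (fun a b e he ho => tame_cast_ne_zero htame h1 h2 a b e he ho) hgne hgdeg (by
      intro s hs
      apply le_antisymm
      · refine (natDegree_sub_le_of_le (natDegree_rev_le c hBd)
          ((natDegree_C_mul_le _ _).trans (natDegree_sub_le_of_le (natDegree_rev_le c hAd)
            ((natDegree_C_mul_le _ _).trans (natDegree_rev_le c hBd))))).trans ?_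
        simp
      · apply le_natDegree_of_ne_zero
        simp only [coeff_sub, coeff_C_mul, coeff_rev_top]
        -- A drop in degree means that `∞` maps to `s`, where the form has order zero.
        intro h0
        apply hs
        have hs0 : s ≠ 0 := by
          rintro rfl
          simp at h0
          exact hcB h0
        have hbs : c + s⁻¹ = b := by
          rw [hb, eq_div_iff hcB]
          field_simp
          linear_combination h0
        have hvφ : ValAt s φ b := by
          have := (ValAt.const s c).add ((ValAt.X s).inv hs0)
          rwa [hbs, ← mob_eq] at this
        obtain ⟨u, v, hv, hu, he⟩ := ordAt_ratOrd b hf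
        rw [hob, zpow_zero, one_mul] at he
        rw [← he] at hu
        have hvg := (hvφ.comp hφ hu).mul
          ((((ValAt.X s).pow 2).inv (pow_ne_zero _ hs0)).neg)
        rw [← hderφ] at hvg
        exact (ordAt_ratOrd s hgne).unique (OrdAt.of_val hvg
          (mul_ne_zero hv (neg_ne_zero.2 (inv_ne_zero (pow_ne_zero _ hs0))))))
    lam hinv'
  obtain ⟨φ₂, ψ₂, hφ₂, hψ₂, i1, i2, hfin⟩ :=
    conj_power_of_two_points hd hτeq hτnc hs hc₁ hc₂ hpts
  refine ⟨ratComp φ φ₂, ratComp ψ₂ ψ, ?_, ?_, ?_⟩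
  · rw [ratComp_assoc _ _ _ (nonconst_comp hψ₂ hψ), ← ratComp_assoc φ₂ _ _ hψ, i1, X_ratComp, h1]
  · rw [ratComp_assoc _ _ _ (nonconst_comp hφ hφ₂), ← ratComp_assoc ψ _ _ hφ₂, h2, X_ratComp, i2]
  · have : ratComp (ratComp (ratComp ψ₂ ψ) σ) (ratComp φ φ₂) = ratComp (ratComp ψ₂ τ) φ₂ := by
      rw [← ratComp_assoc _ _ _ hφ₂, ratComp_assoc ψ₂ _ _ hnc, ratComp_assoc ψ₂ _ _ hφ]
    rwa [this]

end RatDyn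

/-- Lemma 2.3: a tamely ramified rational map of degree `d ≥ 2` with a nonzero
semi-invariant form of weight one is conjugate to `t^d` or `t^{-d}`. -/
theorem semiinvariant_weight_one_conj_power {k : Type*} [Field k] [IsAlgClosed k]
    (p : ℕ) [CharP k p] (hp2 : p ≠ 2) (hp3 : p ≠ 3)
    (σ : RatFunc k) (d : ℕ) (hd : 2 ≤ d) (hdeg : ratDegree σ = d)
    (htame : TamelyRamified p σ)
    (f : RatFunc k) (hf : f ≠ 0) (lam : kˣ)
    (hinv : ratComp f σ * ratDeriv σ = RatFunc.C (lam : k) * f) :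
    ∃ φ ψ : RatFunc k, ratComp φ ψ = RatFunc.X ∧ ratComp ψ φ = RatFunc.X ∧
      (ratComp (ratComp ψ σ) φ = RatFunc.X ^ (d : ℤ) ∨
        ratComp (ratComp ψ σ) φ = RatFunc.X ^ (-(d : ℤ))) := by
  exact RatDyn.conj_power p σ d hd hdeg htame f hf lam hinv
end

section
/- Let k be an algebraically closed field of characteristic p ≥ 0 and let σ ∈ k(t) be nonconstant. If σ admits a nonzero semi-invariant form of nonzero weight — i.e., there exist f ∈ k(t), f ≠ 0, ν ∈ ℤ, ν ≠ 0, and λ ∈ kˣ with (f ∘ σ) · (σ')^ν = λ · f — then σ admits a nonzero semi-invariant form of positive weight not divisible by p: there exist g ∈ k(t), g ≠ 0, an integer μ > 0 with ¬(p ∣ μ) (in particular μ arbitrary positive when p = 0), and λ' ∈ kˣ with (g ∘ σ) · (σ')^μ = λ' · g. -/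
/-!
A form `f` of weight `ν < 0` may be replaced by `f⁻¹`, so assume `ν > 0`. If `p ∤ ν`, nothing is
left to do. If `p ∣ ν`, the factor `(σ') ^ ν` is a `p`-th power, hence has derivative zero, and
differentiating `(f ∘ σ) (σ') ^ ν = λ f` gives `(f' ∘ σ) (σ') ^ (ν + 1) = λ f'`. So if `f' ≠ 0`,
then `f'` is a form of weight `ν + 1`, which is prime to `p`. If `f' = 0`, then `f = h ^ p` because
`k` is perfect (`exists_pow_eq_of_ratDeriv_eq_zero`), and `h` is a form of weight `ν / p` by
injectivity of Frobenius; strong induction on `ν` finishes the proof. For `p = 0` the case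
`p ∣ ν` does not occur, since `ν > 0`.

The algebra needed is that `ratComp · σ` is an algebra endomorphism (`compHom`), that `ratDeriv` is
a derivation (`ratDerivation`), and the chain rule linking them (`ratDeriv_compHom`).
-/

open Polynomial

section Calculus

variable {k : Type*} [Field k]

/-- The quotient rule for an arbitrary fraction, not necessarily in lowest terms. -/
lemma ratDeriv_div (a b : k[X]) (hb : b ≠ 0) :
    ratDeriv (algebraMap k[X] (RatFunc k) a / algebraMap k[X] (RatFunc k) b) =
      algebraMap k[X] (RatFunc k) (derivative a * b - a * derivative b) /
        algebraMap k[X] (RatFunc k) (b ^ 2) := by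
  set f := algebraMap k[X] (RatFunc k) a / algebraMap k[X] (RatFunc k) b with hf
  have hd := f.denom_ne_zero
  have hinj := RatFunc.algebraMap_injective k
  have hb' : algebraMap k[X] (RatFunc k) b ≠ 0 := by simpa using hb
  have hd' : algebraMap k[X] (RatFunc k) f.denom ≠ 0 := by simpa using hd
  have hcross : f.num * b = a * f.denom := by
    apply hinj
    have h := f.num_div_denom.trans hf
    rw [div_eq_div_iff hd' hb'] at h
    simpa using h
  have hder := congrArg derivative hcross
  simp only [derivative_mul] at hder
  unfold ratDeriv
  rw [div_eq_div_iff (by simpa using hd) (by simpa using hb), ← map_mul, ← map_mul]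
  congr 1
  linear_combination (b * f.denom) * hder -
    (derivative b * f.denom + b * derivative f.denom) * hcross

lemma ratDeriv_algebraMap (a : k[X]) :
    ratDeriv (algebraMap k[X] (RatFunc k) a) = algebraMap k[X] (RatFunc k) (derivative a) := by
  simpa using ratDeriv_div a 1 one_ne_zero

lemma ratDeriv_add (f g : RatFunc k) : ratDeriv (f + g) = ratDeriv f + ratDeriv g := by
  induction f using RatFunc.induction_on with | _ a b hb
  induction g using RatFunc.induction_on with | _ c d hd
  have hb' : algebraMap k[X] (RatFunc k) b ≠ 0 := by simpa using hb
  have hd' : algebraMap k[X] (RatFunc k) d ≠ 0 := by simpa using hd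
  rw [div_add_div _ _ hb' hd', ← map_mul, ← map_mul, ← map_mul, ← map_add,
    ratDeriv_div _ _ (mul_ne_zero hb hd), ratDeriv_div _ _ hb, ratDeriv_div _ _ hd]
  simp only [derivative_mul, map_mul, map_add, map_sub, map_pow]
  field_simp
  ring

lemma ratDeriv_mul (f g : RatFunc k) :
    ratDeriv (f * g) = f * ratDeriv g + g * ratDeriv f := by
  induction f using RatFunc.induction_on with | _ a b hb
  induction g using RatFunc.induction_on with | _ c d hd
  have hb' : algebraMap k[X] (RatFunc k) b ≠ 0 := by simpa using hb
  have hd' : algebraMap k[X] (RatFunc k) d ≠ 0 := by simpa using hd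
  rw [div_mul_div_comm, ← map_mul, ← map_mul,
    ratDeriv_div _ _ (mul_ne_zero hb hd), ratDeriv_div _ _ hb, ratDeriv_div _ _ hd]
  simp only [derivative_mul, map_mul, map_add, map_sub, map_pow]
  field_simp
  ring

lemma ratDeriv_C (c : k) : ratDeriv (RatFunc.C c) = 0 := by
  rw [← RatFunc.algebraMap_C, ratDeriv_algebraMap, derivative_C, map_zero]

/-- `ratDeriv` as a `k`-derivation of `k(X)`. -/
noncomputable def ratDerivation (k : Type*) [Field k] : Derivation k (RatFunc k) (RatFunc k) :=
  Derivation.mk'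
    { toFun := ratDeriv
      map_add' := ratDeriv_add
      map_smul' := fun c f => by
        rw [RatFunc.smul_eq_C_mul, ratDeriv_mul, ratDeriv_C]
        simp [RatFunc.smul_eq_C_mul] }
    ratDeriv_mul

lemma ratDerivation_apply (f : RatFunc k) : ratDerivation k f = ratDeriv f := rfl

/-- Composition `f ↦ f ∘ σ` with a nonconstant `σ`, as an endomorphism of the `k`-algebra `k(X)`.
It is well defined because a nonconstant `σ` is transcendental over `k`. -/
noncomputable def compHom (σ : RatFunc k) (hσ : RatFuncNonconst σ) : RatFunc k →ₐ[k] RatFunc k :=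
  RatFunc.liftAlgHom (aeval σ) (nonZeroDivisors_le_comap_nonZeroDivisors_of_injective _
    (transcendental_iff_injective.mp (RatFunc.transcendental_of_ne_C σ hσ)))

lemma compHom_apply (σ : RatFunc k) (hσ : RatFuncNonconst σ) (f : RatFunc k) :
    compHom σ hσ f = ratComp f σ :=
  RatFunc.liftAlgHom_apply _ _ _

lemma compHom_algebraMap (σ : RatFunc k) (hσ : RatFuncNonconst σ) (a : k[X]) :
    compHom σ hσ (algebraMap k[X] (RatFunc k) a) = aeval σ a := by
  simp [compHom_apply, ratComp]

/-- The chain rule. -/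
lemma ratDeriv_compHom (σ : RatFunc k) (hσ : RatFuncNonconst σ) (f : RatFunc k) :
    ratDeriv (compHom σ hσ f) = compHom σ hσ (ratDeriv f) * ratDeriv σ := by
  have hpoly (a : k[X]) : ratDeriv (aeval σ a) = aeval σ (derivative a) * ratDeriv σ := by
    exact (ratDerivation k).map_aeval a σ
  induction f using RatFunc.induction_on with | _ a b hb
  have hb' : algebraMap k[X] (RatFunc k) b ≠ 0 := by simpa using hb
  have hb'' : aeval σ b ≠ 0 := by
    rw [← compHom_algebraMap σ hσ]
    simpa using hb
  rw [ratDeriv_div _ _ hb, map_div₀, map_div₀, compHom_algebraMap, compHom_algebraMap,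
    compHom_algebraMap, compHom_algebraMap, ← ratDerivation_apply, Derivation.leibniz_div,
    ratDerivation_apply, ratDerivation_apply, hpoly, hpoly]
  simp only [map_mul, map_sub, map_pow, smul_eq_mul]
  field_simp

/-- Over a perfect field of characteristic `p`, a rational function with zero derivative is a
`p`-th power. -/
lemma exists_pow_eq_of_ratDeriv_eq_zero (p : ℕ) [Fact p.Prime] [CharP k p] [PerfectRing k p]
    (f : RatFunc k) (hf : ratDeriv f = 0) : ∃ h : RatFunc k, h ^ p = f := by
  have hp : p.Prime := Fact.out
  induction f using RatFunc.induction_on with | _ a b hb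
  have hb' : algebraMap k[X] (RatFunc k) b ≠ 0 := by simpa using hb
  -- Multiply through by `b ^ p`, a constant for the derivation: `c / b ^ p = a / b`.
  set c := a * b ^ (p - 1) with hc
  have hbp : b ^ (p - 1) * b = b ^ p := by rw [← pow_succ, Nat.sub_add_cancel hp.one_le]
  have hdbp : derivative (b ^ p) = 0 := by simp [derivative_pow]
  have hfc : algebraMap k[X] (RatFunc k) a / algebraMap k[X] (RatFunc k) b =
      algebraMap k[X] (RatFunc k) c / algebraMap k[X] (RatFunc k) (b ^ p) := by
    rw [div_eq_div_iff hb' (by simpa using fun h => absurd h hb), ← map_mul, ← map_mul, hc,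
      mul_assoc, hbp]
  rw [hfc] at hf ⊢
  rw [ratDeriv_div _ _ (pow_ne_zero _ hb), hdbp] at hf
  have hdc : derivative c = 0 := by simpa [hb] using hf
  refine ⟨algebraMap k[X] (RatFunc k) ((contract p c).map (frobeniusEquiv k p).symm) /
    algebraMap k[X] (RatFunc k) b, ?_⟩
  rw [div_pow, ← map_pow, ← map_pow, ← polynomial_expand_eq, expand_contract p hdc hp.ne_zero]

end Calculus

/-- The case of positive weight, by strong induction on the weight. -/
lemma exists_weight_not_dvd {k : Type*} [Field k] [IsAlgClosed k] (p : ℕ) [CharP k p]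
    (σ : RatFunc k) (hσ : RatFuncNonconst σ) (n : ℕ) :
    ∀ (f : RatFunc k) (lam : kˣ), f ≠ 0 → 0 < n →
      compHom σ hσ f * ratDeriv σ ^ n = RatFunc.C (lam : k) * f →
      ∃ (g : RatFunc k) (m : ℕ) (lam' : kˣ), g ≠ 0 ∧ 0 < m ∧ ¬ p ∣ m ∧
        compHom σ hσ g * ratDeriv σ ^ m = RatFunc.C (lam' : k) * g := by
  induction n using Nat.strong_induction_on with | _ n ih
  intro f lam hf hn hinv
  by_cases hdvd : p ∣ n
  swap
  · exact ⟨f, n, lam, hf, hn, hdvd, hinv⟩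
  obtain ⟨m, rfl⟩ := hdvd
  have hp0 : p ≠ 0 := by rintro rfl; simp at hn
  have hp : p.Prime := (CharP.char_is_prime_or_zero k p).resolve_right hp0
  have : Fact p.Prime := ⟨hp⟩
  have : CharP (RatFunc k) p := charP_of_injective_algebraMap (algebraMap k (RatFunc k)).injective p
  have hm : 0 < m := Nat.pos_of_mul_pos_left hn
  by_cases hdf : ratDeriv f = 0
  · obtain ⟨h, rfl⟩ := exists_pow_eq_of_ratDeriv_eq_zero p f hdf
    have hh : h ≠ 0 := by rintro rfl; simp [hp0] at hf
    obtain ⟨r, hr⟩ := IsAlgClosed.exists_pow_nat_eq (lam : k) hp.pos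
    have hr0 : r ≠ 0 := by
      rintro rfl
      rw [zero_pow hp0] at hr
      exact lam.ne_zero hr.symm
    refine ih m (lt_mul_of_one_lt_left hm hp.one_lt) h (Units.mk0 r hr0) hh hm ?_
    apply frobenius_inj (RatFunc k) p
    simp only [frobenius_def, Units.val_mk0]
    rw [mul_pow, mul_pow, ← map_pow, ← map_pow, hr, ← pow_mul, mul_comm m p, hinv]
  · refine ⟨ratDeriv f, p * m + 1, lam, hdf, Nat.succ_pos _, ?_, ?_⟩
    · intro h
      exact hp.one_lt.ne' (Nat.dvd_one.mp ((Nat.dvd_add_right (dvd_mul_right p m)).mp h))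
    · have hconst : ratDeriv (ratDeriv σ ^ (p * m)) = 0 := by
        rw [← ratDerivation_apply, Derivation.leibniz_pow]
        simp [CharP.cast_eq_zero]
      have hD := congrArg ratDeriv hinv
      rw [ratDeriv_mul, ratDeriv_mul, hconst, ratDeriv_C, ratDeriv_compHom] at hD
      linear_combination hD

/-- Lemma 2.4: if `σ` admits a nonzero semi-invariant form of nonzero weight, then it
admits a nonzero semi-invariant form of positive weight not divisible by `p`. -/
theorem semiinvariant_positive_weight {k : Type*} [Field k] [IsAlgClosed k]
    (p : ℕ) [CharP k p]
    (σ : RatFunc k) (hσ : RatFuncNonconst σ)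
    (f : RatFunc k) (hf : f ≠ 0) (ν : ℤ) (hν : ν ≠ 0) (lam : kˣ)
    (hinv : ratComp f σ * (ratDeriv σ) ^ ν = RatFunc.C (lam : k) * f) :
    ∃ (g : RatFunc k) (μ : ℤ) (lam' : kˣ), g ≠ 0 ∧ 0 < μ ∧ ¬ ((p : ℤ) ∣ μ) ∧
      ratComp g σ * (ratDeriv σ) ^ μ = RatFunc.C (lam' : k) * g := by
  rw [← compHom_apply σ hσ] at hinv
  obtain ⟨g, m, lam', hg, hm, hpm, hginv⟩ : ∃ (g : RatFunc k) (m : ℕ) (lam' : kˣ),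
      g ≠ 0 ∧ 0 < m ∧ ¬ p ∣ m ∧
        compHom σ hσ g * ratDeriv σ ^ m = RatFunc.C (lam' : k) * g := by
    obtain ⟨n, rfl | rfl⟩ := ν.eq_nat_or_neg
    · exact exists_weight_not_dvd p σ hσ n f lam hf (by lia) (by simpa using hinv)
    · refine exists_weight_not_dvd p σ hσ n f⁻¹ lam⁻¹ (inv_ne_zero hf) (by lia) ?_
      have h := congrArg (·⁻¹) hinv
      simpa [mul_inv, mul_comm] using h
  refine ⟨g, m, lam', hg, by exact_mod_cast hm, by exact_mod_cast hpm, ?_⟩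
  rw [← compHom_apply σ hσ, zpow_natCast, hginv]
end

section
/- Let k be an algebraically closed field of characteristic p ≥ 0, K = k(t) the rational function field, σ ∈ K nonconstant, and suppose there are f ∈ K, f ≠ 0, an integer ν > 0 not divisible by p, and λ ∈ kˣ with (f ∘ σ) · (σ')^ν = λ · f. Let Ω be an algebraic closure of K and g ∈ Ω with g^ν = f. Then there exist a ring homomorphism τ from the intermediate field K⟮g⟯ to itself and a constant c ∈ k with c^ν = λ, such that τ extends the substitution endomorphism of K (for every h ∈ K, τ(h) = h ∘ σ, where K is identified with its image in K⟮g⟯) and τ(g) = c · (σ')⁻¹ · g. -/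
/-!
Substitution of `σ` is a field endomorphism `φ` of `K = k(t)`: since `k` is algebraically closed, a
nonconstant `σ` is transcendental over `k`. As `Ω` is algebraic over `K` and algebraically closed,
`φ` extends to an endomorphism `Ψ` of `Ω`. Semi-invariance of `f` gives
`(Ψ g * σ' / g) ^ ν = λ`, so `Ψ g * σ' / g` is algebraic over `k`, hence is a constant `c ∈ k`
with `c ^ ν = λ`. Thus `Ψ g = c * σ'⁻¹ * g` lies in `K⟮g⟯`, so `Ψ` preserves `K⟮g⟯` and restricts to
the required `τ`. Taking `c` to be this quotient, rather than a root of `λ` fixed in advance, avoids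
any correction by roots of unity.
-/

open Polynomial

/-- An element of an extension field that is algebraic over an algebraically closed field `k`
already lies in `k`. The extension is given by a bare ring homomorphism, so that the lemma applies
to `k → RatFunc k → Ω` without a `k`-algebra structure on `Ω`. -/
lemma exists_eq_of_eval₂_eq_zero {k L : Type*} [Field k] [IsAlgClosed k] [Field L]
    (i : k →+* L) (x : L) (q : k[X]) (hq : q ≠ 0) (h : q.eval₂ i x = 0) : ∃ c, i c = x := by
  let _ := i.toAlgebra
  have hx : IsIntegral k x := isAlgebraic_iff_isIntegral.mp ⟨q, hq, h⟩
  exact minpoly.mem_range_of_degree_eq_one k x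
    (IsAlgClosed.degree_eq_one_of_irreducible k (minpoly.irreducible hx))

lemma exists_ratComp_ringHom {k : Type*} [Field k] [IsAlgClosed k] (σ : RatFunc k)
    (hσ : RatFuncNonconst σ) : ∃ φ : RatFunc k →+* RatFunc k, ∀ h, φ h = ratComp h σ := by
  have key : ∀ q : k[X], q ≠ 0 → aeval σ q ≠ 0 := by
    intro q hq h
    obtain ⟨c, hc⟩ := exists_eq_of_eval₂_eq_zero (algebraMap k (RatFunc k)) σ q hq h
    exact hσ ⟨c, by rw [← hc, RatFunc.algebraMap_eq_C]⟩
  have hle : nonZeroDivisors k[X] ≤ (nonZeroDivisors (RatFunc k)).comap (aeval (R := k) σ) := by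
    intro q hq
    exact mem_nonZeroDivisors_of_ne_zero (key q (nonZeroDivisors.ne_zero hq))
  exact ⟨(RatFunc.liftAlgHom (aeval σ) hle : RatFunc k →ₐ[k] RatFunc k).toRingHom,
    fun h => RatFunc.liftAlgHom_apply _ hle h⟩

/-- Extension of embeddings along an algebraic extension. The target carries no algebra structure
here, so that in applications it may be `E` itself with an embedding of `K` other than the
structure map. -/
lemma exists_ringHom_extension {K E M : Type*} [Field K] [Field E] [Algebra K E]
    [Algebra.IsAlgebraic K E] [Field M] [IsAlgClosed M] (i : K →+* M) :
    ∃ ψ : E →+* M, ∀ x, ψ (algebraMap K E x) = i x := by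
  let _ := i.toAlgebra
  exact ⟨(IsAlgClosed.lift : E →ₐ[K] M).toRingHom,
    fun x => (IsAlgClosed.lift : E →ₐ[K] M).commutes x⟩

set_option synthInstance.maxHeartbeats 1000000 in
open IntermediateField in
/-- Lemma 2.5 (field-theoretic form): the substitution endomorphism of `K = k(t)`
lifts to the cyclic cover `K(f^{1/ν})`, and the lift scales `g = f^{1/ν}` by
`c · (σ')⁻¹` with `c^ν = λ`. -/
theorem lift_to_cyclic_cover {k : Type*} [Field k] [IsAlgClosed k]
    (p : ℕ) [CharP k p]
    (σ : RatFunc k) (hσ : RatFuncNonconst σ)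
    (f : RatFunc k) (hf : f ≠ 0) (ν : ℤ) (hν : 0 < ν) (hpν : ¬ ((p : ℤ) ∣ ν))
    (lam : kˣ)
    (hinv : ratComp f σ * (ratDeriv σ) ^ ν = RatFunc.C (lam : k) * f)
    (Ω : Type*) [Field Ω] [Algebra (RatFunc k) Ω] [IsAlgClosure (RatFunc k) Ω]
    (g : Ω) (hg : g ^ ν = algebraMap (RatFunc k) Ω f) :
    ∃ (τ : (RatFunc k)⟮g⟯ →+* (RatFunc k)⟮g⟯) (c : k), c ^ ν = (lam : k) ∧
      (∀ h : RatFunc k, τ (algebraMap (RatFunc k) (RatFunc k)⟮g⟯ h) =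
        algebraMap (RatFunc k) (RatFunc k)⟮g⟯ (ratComp h σ)) ∧
      τ ⟨g, IntermediateField.mem_adjoin_simple_self (RatFunc k) g⟩ =
        algebraMap (RatFunc k) (RatFunc k)⟮g⟯ (RatFunc.C c * (ratDeriv σ)⁻¹) *
          ⟨g, IntermediateField.mem_adjoin_simple_self (RatFunc k) g⟩ := by
  obtain ⟨φ, hφ⟩ := exists_ratComp_ringHom σ hσ
  have : IsAlgClosed Ω := IsAlgClosure.isAlgClosed (RatFunc k)
  have : Algebra.IsAlgebraic (RatFunc k) Ω := IsAlgClosure.isAlgebraic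
  obtain ⟨Ψ, hΨ⟩ := exists_ringHom_extension (E := Ω) ((algebraMap (RatFunc k) Ω).comp φ)
  have hΨ' : ∀ h, Ψ (algebraMap (RatFunc k) Ω h) = algebraMap (RatFunc k) Ω (ratComp h σ) := by
    intro h
    rw [hΨ, RingHom.comp_apply, hφ]
  lift ν to ℕ using hν.le
  simp only [zpow_natCast] at hinv hg ⊢
  have hν0 : ν ≠ 0 := by
    rintro rfl
    simp at hν
  have hlam : RatFunc.C (lam : k) ≠ 0 := (_root_.map_ne_zero _).mpr lam.ne_zero
  -- A vanishing `σ'` would make the left side of the semi-invariance relation zero.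
  have hd : ratDeriv σ ≠ 0 := by
    intro h0
    rw [h0, zero_pow hν0, mul_zero] at hinv
    exact mul_ne_zero hlam hf hinv.symm
  have hd' : algebraMap (RatFunc k) Ω (ratDeriv σ) ≠ 0 := (_root_.map_ne_zero _).mpr hd
  have hf' : algebraMap (RatFunc k) Ω f ≠ 0 := (_root_.map_ne_zero _).mpr hf
  have hg0 : g ≠ 0 := by
    rintro rfl
    exact hf' (by rw [← hg, zero_pow hν0])
  have hpow : (Ψ g * algebraMap (RatFunc k) Ω (ratDeriv σ) / g) ^ ν =
      algebraMap (RatFunc k) Ω (RatFunc.C (lam : k)) := by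
    rw [div_pow, mul_pow, ← map_pow Ψ, hg, hΨ', ← map_pow, ← map_mul, hinv, map_mul,
      mul_div_cancel_right₀ _ hf']
  obtain ⟨c, hc⟩ := exists_eq_of_eval₂_eq_zero
    ((algebraMap (RatFunc k) Ω).comp RatFunc.C)
    (Ψ g * algebraMap (RatFunc k) Ω (ratDeriv σ) / g) (X ^ ν - C (lam : k))
    (X_pow_sub_C_ne_zero (Nat.pos_of_ne_zero hν0) _)
    (by rw [eval₂_sub, eval₂_X_pow, eval₂_C, hpow, RingHom.comp_apply, sub_self])
  have hcν : c ^ ν = (lam : k) := by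
    apply ((algebraMap (RatFunc k) Ω).comp RatFunc.C).injective
    rw [map_pow, hc, hpow, RingHom.comp_apply]
  have hΨg : Ψ g = algebraMap (RatFunc k) Ω (RatFunc.C c * (ratDeriv σ)⁻¹) * g := by
    rw [RingHom.comp_apply] at hc
    rw [map_mul, hc, map_inv₀]
    field_simp
  have hmem : ∀ x ∈ (RatFunc k)⟮g⟯, Ψ x ∈ (RatFunc k)⟮g⟯ := by
    intro x hx
    induction hx using IntermediateField.adjoin_induction with
    | mem y hy =>
      rw [Set.mem_singleton_iff.mp hy, hΨg]
      exact mul_mem (IntermediateField.algebraMap_mem _ _)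
        (IntermediateField.mem_adjoin_simple_self _ g)
    | algebraMap y =>
      rw [hΨ']
      exact IntermediateField.algebraMap_mem _ _
    | add y z _ _ hy hz => rw [map_add]; exact add_mem hy hz
    | inv y _ hy => rw [map_inv₀]; exact inv_mem hy
    | mul y z _ _ hy hz => rw [map_mul]; exact mul_mem hy hz
  refine ⟨(Ψ.comp (algebraMap (RatFunc k)⟮g⟯ Ω)).codRestrict (RatFunc k)⟮g⟯
    (fun x => hmem x x.2), c, hcν, fun h => Subtype.ext (hΨ' h), Subtype.ext hΨg⟩
end

section
/- Let p be an odd prime, let k be a field of characteristic p, and let d be a positive integer not divisible by p. Let S := Polynomial.dickson 1 1 d ∈ k[X] be the Dickson (normalized Chebyshev) polynomial of degree d. Then (S² − 4)^{(p−1)/2} = (derivative S)^{p−1} · (X² − 4)^{(p−1)/2} in k[X]. Equivalently, the form ω = (dt)^{p−1}/(t²−4)^{(p−1)/2} is an invariant form of weight p−1 for the Chebyshev polynomial of degree d in characteristic p. -/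
open Polynomial

/-!
Write `C d` and `S d` for the rescaled Chebyshev polynomials of the first and second kind, so that
`dickson 1 1 d = C d`. The Pell-type identity `C d ^ 2 - 4 = (X ^ 2 - 4) * S (d - 1) ^ 2`
(`chebyshevC_sq_sub_four`) and the derivative formula `(C d)' = d * S (d - 1)`
(`derivative_chebyshevC`) hold over every commutative ring. Raising the first to the power
`(p - 1) / 2` gives the claim up to the factor `d ^ (p - 1)`, which is `1` in characteristic
`p ∤ d` by Fermat's little theorem.
-/

theorem chebyshevC_sq_sub_four (R : Type*) [CommRing R] (n : ℤ) :
    Chebyshev.C R n ^ 2 - 4 = (X ^ 2 - 4) * Chebyshev.S R (n - 1) ^ 2 := by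
  have h := Chebyshev.S_sq_add_S_sq R (n - 1)
  rw [sub_add_cancel] at h
  rw [Chebyshev.C_eq_S_sub_X_mul_S]
  linear_combination 4 * h

theorem derivative_chebyshevC (R : Type*) [CommRing R] (n : ℕ) :
    derivative (Chebyshev.C R n) = (n : R[X]) * Chebyshev.S R ((n : ℤ) - 1) := by
  induction n using Nat.twoStepInduction with
  | zero => simp
  | one => simp
  | more n ih₁ ih₂ =>
    have hC := Chebyshev.C_eq_S_sub_X_mul_S R ((n : ℤ) + 1)
    have hS := Chebyshev.S_add_one R (n : ℤ)
    have e : ((n + 2 : ℕ) : ℤ) - 1 = n + 1 := by push_cast; ring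
    rw [e]
    push_cast at ih₁ ih₂ ⊢
    rw [add_sub_cancel_right] at ih₂ hC
    rw [Chebyshev.C_add_two, derivative_sub, derivative_mul, derivative_X, ih₁, ih₂]
    linear_combination hC - (n : R[X]) * hS

/-- Example 1.1(2): the identity in `k[X]`, `char k = p` odd, expressing that
`ω = (dt)^{p-1}/(t²-4)^{(p-1)/2}` is an invariant form of weight `p-1` for the
Chebyshev (Dickson) polynomial of degree `d` when `p ∤ d`. -/
theorem chebyshev_invariant_form_mod_p {k : Type*} [Field k]
    (p : ℕ) (hp : p.Prime) (hodd : Odd p) [CharP k p]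
    (d : ℕ) (hd : 0 < d) (hpd : ¬ p ∣ d) :
    ((Polynomial.dickson 1 (1 : k) d) ^ 2 - 4) ^ ((p - 1) / 2) =
      (Polynomial.derivative (Polynomial.dickson 1 (1 : k) d)) ^ (p - 1) *
        ((Polynomial.X ^ 2 - 4) ^ ((p - 1) / 2)) := by
  have : Fact p.Prime := ⟨hp⟩
  have hfermat : (d : k[X]) ^ (p - 1) = 1 := by
    have h : (d : ZMod p) ^ (p - 1) = 1 :=
      ZMod.pow_card_sub_one_eq_one (by rwa [Ne, ZMod.natCast_eq_zero_iff])
    simpa using congrArg (ZMod.castHom dvd_rfl k[X]) h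
  have hhalf : 2 * ((p - 1) / 2) = p - 1 := by
    obtain ⟨m, rfl⟩ := hodd
    omega
  rw [dickson_one_one_eq_chebyshev_C, derivative_chebyshevC, chebyshevC_sq_sub_four, mul_pow,
    mul_pow, hfermat, ← pow_mul, hhalf]
  ring
end

section
/- Let R be a commutative ring and d a natural number. Then in R[X]: (X² − 4) · (derivative (dickson 1 1 d))² = (d : R)² · ((dickson 1 1 d)² − 4). -/
/-!
Over any commutative ring, `dickson 1 1 d` is the rescaled Chebyshev polynomial `C_d`, whose
companion of the second kind is `S_d`. The identity is the product of two facts: the derivative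
formula `C_d' = d S_{d-1}`, and the Pell equation `C_d² - 4 = (X² - 4) S_{d-1}²`, which expresses
`(x^d + x^{-d})² - 4 = (x^d - x^{-d})²` in terms of `X = x + x⁻¹`.
-/

open Polynomial

theorem derivative_chebyshev_C {R : Type*} [CommRing R] (n : ℕ) :
    derivative (Chebyshev.C R n) = (n : R[X]) * Chebyshev.S R ((n : ℤ) - 1) := by
  induction n using Nat.twoStepInduction with
  | zero => simp
  | one => simp
  | more n h0 h1 =>
    have hC := congrArg derivative (Chebyshev.C_add_two R (n : ℤ))
    have hS := Chebyshev.S_add_one R (n : ℤ)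
    have hCS := Chebyshev.S_eq_X_mul_S_add_C R (n : ℤ)
    push_cast at h1 ⊢
    rw [add_sub_cancel_right] at h1
    rw [show (n : ℤ) + 2 - 1 = n + 1 by ring]
    rw [derivative_sub, derivative_mul, derivative_X, h0, h1] at hC
    linear_combination hC - hCS - (n : R[X]) * hS

theorem chebyshev_C_sq_sub_four {R : Type*} [CommRing R] (n : ℤ) :
    Chebyshev.C R n ^ 2 - 4 = (X ^ 2 - 4) * Chebyshev.S R (n - 1) ^ 2 := by
  have h := Chebyshev.S_sq_add_S_sq R (n - 1)
  rw [sub_add_cancel] at h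
  rw [Chebyshev.C_eq_S_sub_X_mul_S]
  linear_combination 4 * h


/-- The differential identity for Dickson polynomials of the first kind:
`(X² − 4) · (D_d')² = d² · (D_d² − 4)`. -/
theorem dickson_derivative_identity {R : Type*} [CommRing R] (d : ℕ) :
    (Polynomial.X ^ 2 - 4) * (Polynomial.derivative (Polynomial.dickson 1 (1 : R) d)) ^ 2 =
      (Polynomial.C (d : R)) ^ 2 * ((Polynomial.dickson 1 (1 : R) d) ^ 2 - 4) := by
  rw [dickson_one_one_eq_chebyshev_C, derivative_chebyshev_C, chebyshev_C_sq_sub_four, C_eq_natCast]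
  ring
end

section
/- Let k be a field and d a natural number. If σ ∈ k(t) satisfies the functional equation σ ∘ (X + X⁻¹) = X^d + X^{−d} in RatFunc k, then σ equals the image in RatFunc k of the Dickson polynomial dickson 1 1 d. In particular, a rational function satisfying the Chebyshev functional equation is the Chebyshev polynomial. -/
/-!
`X + X⁻¹` is not a constant, hence is transcendental over `k`, so `f ↦ f ∘ (X + X⁻¹)` is an
injective field homomorphism on `RatFunc k`. The Dickson polynomial also solves the functional
equation, and injectivity forces `σ` to coincide with it.
-/

open Polynomial

lemma X_add_inv_ne_C {k : Type*} [Field k] :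
    ¬ ∃ c : k, (RatFunc.X + RatFunc.X⁻¹ : RatFunc k) = RatFunc.C c := by
  rintro ⟨c, hc⟩
  have hX : (RatFunc.X : RatFunc k) ≠ 0 := RatFunc.X_ne_zero
  -- Clearing denominators turns the equation into a polynomial identity `X ^ 2 + 1 = c X`.
  have h1 : (RatFunc.X : RatFunc k) ^ 2 + 1 = RatFunc.C c * RatFunc.X := by
    rw [← hc]
    field_simp
  have h2 : (X ^ 2 + 1 : k[X]) = C c * X := by
    apply RatFunc.algebraMap_injective k
    simpa using h1
  have h3 := congrArg (fun p : k[X] => p.coeff 2) h2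
  simp [coeff_one] at h3

lemma aeval_dickson_X_add_inv {k : Type*} [Field k] (d : ℕ) :
    aeval (RatFunc.X + RatFunc.X⁻¹ : RatFunc k) (dickson 1 (1 : k) d) =
      RatFunc.X ^ (d : ℤ) + RatFunc.X ^ (-(d : ℤ)) := by
  have hX : (RatFunc.X : RatFunc k) ≠ 0 := RatFunc.X_ne_zero
  rw [aeval_def, eval₂_eq_eval_map, map_dickson, map_one,
    dickson_one_one_eval_add_inv _ _ (mul_inv_cancel₀ hX)]
  simp

/-- Uniqueness in the Chebyshev functional equation: a rational function `σ` with
`σ(t + t⁻¹) = t^d + t^{-d}` is the Dickson polynomial `dickson 1 1 d`. -/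
theorem chebyshev_functional_equation_unique {k : Type*} [Field k] (d : ℕ)
    (σ : RatFunc k)
    (h : ratComp σ (RatFunc.X + RatFunc.X⁻¹) =
      RatFunc.X ^ (d : ℤ) + RatFunc.X ^ (-(d : ℤ))) :
    σ = algebraMap (Polynomial k) (RatFunc k) (Polynomial.dickson 1 (1 : k) d) := by
  have ht := RatFunc.transcendental_of_ne_C _ (X_add_inv_ne_C (k := k))
  -- Composition with `X + X⁻¹` is the isomorphism of `RatFunc k` onto `k(X + X⁻¹)`.
  apply (RatFunc.algEquivOfTranscendental _ ht).injective
  apply Subtype.ext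
  rw [RatFunc.algEquivOfTranscendental_apply, RatFunc.algEquivOfTranscendental_algebraMap]
  rw [← IntermediateField.aeval_coe]
  exact h.trans (aeval_dickson_X_add_inv d).symm
end

section
/- Let k be a field, d ≥ 1 a natural number, and λ, c ∈ k with c ≠ 0, c² = λ and λ^d = λ. Suppose σ ∈ k(t) satisfies σ ∘ (X + C λ · X⁻¹) = X^d + C λ · X^{−d} in RatFunc k. Then (C c)⁻¹ · (σ ∘ (C c · X)) equals the image in RatFunc k of dickson 1 1 d, or equals minus that image. That is, the rescaling c⁻¹σ(ct) is ±Cheb_d. -/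
/-!
From `c ^ 2 = lam` and `lam ^ d = lam` one gets `(c ^ d) ^ 2 = c ^ 2`, so `c ^ d = e * c` with a
sign `e = ±1`. Put `g = X + lam * X⁻¹`. Since `c⁻¹ * g = y + y⁻¹` for `y = c⁻¹ * X`, the Dickson
identity gives `e * c * dickson 1 1 d (c⁻¹ * g) = X ^ d + lam * X ^ (-d)`, which is `σ ∘ g`. As `g`
is transcendental over `k`, the substitution of `g` is injective on polynomials, whence
`σ = e * c * dickson 1 1 d (c⁻¹ * t)`; substituting `t = c * X` gives the claim
(`rescaled_eq_sign_mul_dickson`).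
-/

open Polynomial

/-- The Laurent polynomial `a * X + b * X⁻¹` with `a ≠ 0` is transcendental; this covers
both `X + lam * X⁻¹` and `c * X`. -/
lemma transcendental_linear_add_inv {k : Type*} [Field k] (a b : k) (ha : a ≠ 0) :
    Transcendental k
      (RatFunc.C a * RatFunc.X + RatFunc.C b * (RatFunc.X : RatFunc k)⁻¹) := by
  apply RatFunc.transcendental_of_ne_C
  rintro ⟨r, hr⟩
  have hX : (RatFunc.X : RatFunc k) ≠ 0 := RatFunc.X_ne_zero
  have h1 : RatFunc.C a * RatFunc.X ^ 2 + RatFunc.C b = RatFunc.C r * (RatFunc.X : RatFunc k) := by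
    rw [← hr]
    field_simp
  have h2 : (C a * X ^ 2 + C b : k[X]) = C r * X := by
    apply RatFunc.algebraMap_injective k
    simpa using h1
  have h3 := congrArg (fun p : k[X] => p.coeff 2) h2
  simp at h3
  exact ha h3

/-- The rescaled function is `e` times the Dickson polynomial, where `e` is the sign with
`c ^ d = e * c`. -/
lemma rescaled_eq_sign_mul_dickson {k : Type*} [Field k] (d : ℕ) (lam c e : k) (hc : c ≠ 0)
    (hc2 : c ^ 2 = lam) (he : e * e = 1) (hcd : c ^ d = e * c) (σ : RatFunc k)
    (h : ratComp σ (RatFunc.X + RatFunc.C lam * RatFunc.X⁻¹) =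
      RatFunc.X ^ (d : ℤ) + RatFunc.C lam * RatFunc.X ^ (-(d : ℤ))) :
    (RatFunc.C c)⁻¹ * ratComp σ (RatFunc.C c * RatFunc.X) =
      RatFunc.C e * algebraMap (Polynomial k) (RatFunc k) (Polynomial.dickson 1 (1 : k) d) := by
  have hX : (RatFunc.X : RatFunc k) ≠ 0 := RatFunc.X_ne_zero
  have hC : (RatFunc.C c : RatFunc k) ≠ 0 := by simpa using hc
  have hg := transcendental_linear_add_inv 1 lam one_ne_zero
  have hl := transcendental_linear_add_inv c 0 hc
  simp only [map_one, one_mul, map_zero, zero_mul, add_zero] at hg hl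
  rw [transcendental_iff_injective] at hg hl
  have hdickson : aeval ((RatFunc.C c)⁻¹ * (RatFunc.X + RatFunc.C lam * (RatFunc.X)⁻¹))
      (dickson 1 (1 : k) d) =
        ((RatFunc.C c)⁻¹ * RatFunc.X) ^ d + (RatFunc.C c * (RatFunc.X)⁻¹) ^ d := by
    have := dickson_one_one_eval_add_inv ((RatFunc.C c)⁻¹ * RatFunc.X)
      (RatFunc.C c * (RatFunc.X : RatFunc k)⁻¹) (by field_simp) d
    rw [← this, aeval_def, ← eval_map, map_dickson, map_one]
    congr 1
    rw [← hc2, map_pow]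
    field_simp
  have hE : (RatFunc.C e * RatFunc.C e : RatFunc k) = 1 := by
    rw [← map_mul, he, map_one]
  have hCd : (RatFunc.C c : RatFunc k) ^ d = RatFunc.C e * RatFunc.C c := by
    rw [← map_pow, hcd, map_mul]
  have hE0 : (RatFunc.C e : RatFunc k) ≠ 0 := left_ne_zero_of_mul_eq_one hE
  have hq : aeval (RatFunc.X + RatFunc.C lam * (RatFunc.X)⁻¹) σ.denom ≠ (0 : RatFunc k) :=
    (map_ne_zero_iff _ hg).2 σ.denom_ne_zero
  have hq' : aeval (RatFunc.C c * RatFunc.X) σ.denom ≠ (0 : RatFunc k) :=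
    (map_ne_zero_iff _ hl).2 σ.denom_ne_zero
  have hpoly : σ.num = C (e * c) * (dickson 1 (1 : k) d).comp (C c⁻¹ * X) * σ.denom := by
    apply hg
    rw [ratComp, div_eq_iff hq] at h
    rw [h, map_mul, map_mul, aeval_comp]
    simp only [aeval_C, map_mul, aeval_X, RatFunc.algebraMap_eq_C, map_inv₀, hdickson]
    congr 1
    rw [mul_pow, mul_pow, inv_pow, hCd, zpow_neg, zpow_natCast, inv_pow, ← hc2, map_pow]
    field_simp
    linear_combination (-(RatFunc.C c : RatFunc k) ^ 2) * hE
  have hn := congrArg (aeval (RatFunc.C c * (RatFunc.X : RatFunc k))) hpoly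
  rw [map_mul, map_mul, aeval_comp] at hn
  simp only [aeval_C, map_mul, aeval_X, RatFunc.algebraMap_eq_C, map_inv₀,
    inv_mul_cancel_left₀ hC, RatFunc.aeval_X_left_eq_algebraMap] at hn
  rw [ratComp, hn]
  field_simp

/-- The parenthetical claim in the proof of Lemma 2.6: if `σ(t + λt⁻¹) = t^d + λ t^{-d}`
with `c² = λ`, `λ^d = λ`, `c ≠ 0`, then `c⁻¹ σ(ct) = ±Cheb_d`. -/
theorem rescaled_is_pm_chebyshev {k : Type*} [Field k] (d : ℕ) (hd : 1 ≤ d)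
    (lam c : k) (hc : c ≠ 0) (hc2 : c ^ 2 = lam) (hlam : lam ^ d = lam)
    (σ : RatFunc k)
    (h : ratComp σ (RatFunc.X + RatFunc.C lam * RatFunc.X⁻¹) =
      RatFunc.X ^ (d : ℤ) + RatFunc.C lam * RatFunc.X ^ (-(d : ℤ))) :
    (RatFunc.C c)⁻¹ * ratComp σ (RatFunc.C c * RatFunc.X) =
        algebraMap (Polynomial k) (RatFunc k) (Polynomial.dickson 1 (1 : k) d) ∨
      (RatFunc.C c)⁻¹ * ratComp σ (RatFunc.C c * RatFunc.X) =
        - algebraMap (Polynomial k) (RatFunc k) (Polynomial.dickson 1 (1 : k) d) := by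
  have hsq : (c ^ d) ^ 2 = c ^ 2 := by
    rw [← pow_mul, mul_comm, pow_mul, hc2, hlam]
  rcases sq_eq_sq_iff_eq_or_eq_neg.1 hsq with h1 | h1
  · left
    simpa using rescaled_eq_sign_mul_dickson d lam c 1 hc hc2 (by ring) (by rw [h1, one_mul]) σ h
  · right
    simpa using rescaled_eq_sign_mul_dickson d lam c (-1) hc hc2 (by ring) (by rw [h1]; ring) σ h
end
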